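/- arXiv:2212.02554 — 4 statements merged into one kernel-verified Lean document; each statement's English description precedes it below -/
import Mathlib

section
/- Let R be a commutative Noetherian ring, p ∈ Spec R, E an injective R-module, and M an R-module. Then for all i ≥ 0, the k(p)-vector space Tor_i^{R_p}(k(p), Hom_R(R_p, Hom_R(M,E))) is isomorphic to the direct product Hom_R(k(p), E)^{μ_i(p,M)} of copies of Hom_R(k(p), E) indexed by a set of cardinality μ_i(p,M); in particular its k(p)-dimension equals dim_{k(p)} Hom_R(k(p),E)^{μ_i(p,M)}. -/
universe u

variable (R : Type u) [CommRing R]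

/-- A morphism `f : F → M` with `F` flat is a flat precover if every morphism from a
flat module to `M` factors through `f`. -/
def IsFlatPrecover {F M : Type u} [AddCommGroup F] [AddCommGroup M] [Module R F]
    [Module R M] (f : F →ₗ[R] M) : Prop :=
  Module.Flat R F ∧
    ∀ (F' : Type u) [AddCommGroup F'] [Module R F'], Module.Flat R F' →
      ∀ g : F' →ₗ[R] M, ∃ h : F' →ₗ[R] F, f ∘ₗ h = g

/-- A flat precover `f : F → M` is a flat cover if every `h : F → F` with `f ∘ h = f`
is an automorphism. -/
def IsFlatCover {F M : Type u} [AddCommGroup F] [AddCommGroup M] [Module R F]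
    [Module R M] (f : F →ₗ[R] M) : Prop :=
  IsFlatPrecover R f ∧ ∀ h : F →ₗ[R] F, f ∘ₗ h = f → Function.Bijective h

/-- A morphism `i : M → E` is an injective envelope if `E` is injective, `i` is
injective, and the image of `i` is an essential submodule of `E`. -/
def IsInjectiveEnvelope {M E : Type u} [AddCommGroup M] [AddCommGroup E] [Module R M]
    [Module R E] (i : M →ₗ[R] E) : Prop :=
  Module.Injective R E ∧ Function.Injective i ∧
    ∀ N : Submodule R E, N ≠ ⊥ → N ⊓ LinearMap.range i ≠ ⊥

/-- An injective cogenerator is an injective module `E` such that `Hom(N, E) ≠ 0`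
for every nonzero module `N`. -/
def IsInjectiveCogenerator (E : Type u) [AddCommGroup E] [Module R E] : Prop :=
  Module.Injective R E ∧
    ∀ (N : Type u) [AddCommGroup N] [Module R N], (∃ x : N, x ≠ 0) →
      ∃ g : N →ₗ[R] E, g ≠ 0

open CategoryTheory

/-- The `A`-module structure on `Hom_R(X, M)` for an `R`-algebra `A` and an `A`-module
`X`, given by `(a • f) x = f (a • x)`. -/
noncomputable instance (priority := 50) LinearMap.domSMulModule (A : Type u) [CommRing A] [Algebra R A]
    (X : Type u) [AddCommGroup X] [Module R X] [Module A X] [IsScalarTower R A X]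
    (M : Type u) [AddCommGroup M] [Module R M] : Module A (X →ₗ[R] M) where
  smul a f := f ∘ₗ (a • (LinearMap.id : X →ₗ[R] X))
  one_smul f := LinearMap.ext fun x => by
    show f ((1 : A) • x) = f x
    rw [one_smul]
  mul_smul a b f := LinearMap.ext fun x => by
    show f ((a * b) • x) = f (b • a • x)
    rw [mul_comm, mul_smul]
  smul_zero a := rfl
  smul_add a f g := rfl
  add_smul a b f := LinearMap.ext fun x => by
    show f ((a + b) • x) = f (a • x) + f (b • x)
    rw [add_smul, map_add]
  zero_smul f := LinearMap.ext fun x => by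
    show f ((0 : A) • x) = 0
    rw [zero_smul, map_zero]

attribute [local instance] RestrictScalars.moduleOrig

universe v w

/-!
For `K` finitely presented and `E` injective, the evaluation map
`K ⊗ Hom(X, E) → Hom(Hom(K, X), E)` is an isomorphism, since it is one for `K` finite free and both
sides are right exact in `K`. Over a Noetherian ring, dimension shifting along `0 → L → Q → K → 0`
with `Q` finite free upgrades it to `Tor_n(K, Hom(X, E)) ≃ Hom(Ext^n(K, X), E)`.

Over `A = R_𝔭` the module `Hom_R(A, E)` is again injective and
`Hom_R(A, Hom_R(M, E)) ≃ Hom_A(M_𝔭, Hom_R(A, E))`. The duality for `K = k(𝔭)` and `X = M_𝔭` thus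
identifies the `Tor` in question with `Hom_A(Ext^i(k(𝔭), M_𝔭), Hom_R(A, E))`, and a basis of the
`Ext` over `k(𝔭)` turns this into a product of copies of
`Hom_A(k(𝔭), Hom_R(A, E)) ≃ Hom_R(k(𝔭), E)`.
-/

section LeftDerived

open Limits HomologicalComplex

variable {C D : Type*} [Category* C] [Category* D] [Abelian C] [HasProjectiveResolutions C]
  [Abelian D]

/-- The isomorphism `ProjectiveResolution.isoLeftDerivedObj`, with its target spelled as a homology
object instead of a value of `homologyFunctor`, so that lemmas on `homologyMap` apply to it. -/
noncomputable def leftDerivedObjIsoHomology {X : C} (P : ProjectiveResolution X) (F : C ⥤ D)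
    [F.Additive] (n : ℕ) :
    (F.leftDerived n).obj X ≅ ((F.mapHomologicalComplex (.down ℕ)).obj P.complex).homology n :=
  P.isoLeftDerivedObj F n

lemma leftDerived_app_comp_leftDerivedObjIsoHomology_hom {F G : C ⥤ D} [F.Additive] [G.Additive]
    (α : F ⟶ G) {X : C} (P : ProjectiveResolution X) (n : ℕ) :
    (NatTrans.leftDerived α n).app X ≫ (leftDerivedObjIsoHomology P G n).hom =
      (leftDerivedObjIsoHomology P F n).hom ≫
        homologyMap ((NatTrans.mapHomologicalComplex α (.down ℕ)).app P.complex) n :=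
  (Iso.eq_comp_inv _).1 ((P.leftDerived_app_eq α n).trans (Category.assoc _ _ _).symm)

lemma isZero_leftDerived_obj_succ_of_exact (F : C ⥤ D) [F.Additive] [PreservesFiniteLimits F]
    [PreservesFiniteColimits F] (X : C) (n : ℕ) :
    IsZero ((F.leftDerived (n + 1)).obj X) := by
  let P := projectiveResolution X
  have exact_image : ((F.mapHomologicalComplex _).obj P.complex).ExactAt (n + 1) :=
    (P.complex_exactAt_succ n).map F
  exact ((exactAt_iff_isZero_homology _ _).1 exact_image).of_iso
    (leftDerivedObjIsoHomology P F (n + 1))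

theorem exists_mono_leftDerived_connecting_exact (S : ShortComplex (C ⥤ D))
    [S.X₁.Additive] [S.X₂.Additive] [S.X₃.Additive]
    (hS : ∀ (P : C) [Projective P], (S.map ((evaluation C D).obj P)).ShortExact)
    (X : C) (n : ℕ) (h₂ : IsZero ((S.X₂.leftDerived (n + 1)).obj X)) :
    ∃ (δ : (S.X₃.leftDerived (n + 1)).obj X ⟶ (S.X₁.leftDerived n).obj X)
      (zero : δ ≫ (NatTrans.leftDerived S.f n).app X = 0),
      Mono δ ∧ (ShortComplex.mk δ _ zero).Exact := by
  let P := projectiveResolution X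
  let T : ShortComplex (ChainComplex D ℕ) := ShortComplex.mk
    ((NatTrans.mapHomologicalComplex S.f _).app P.complex)
    ((NatTrans.mapHomologicalComplex S.g _).app P.complex) (by
      ext i
      exact NatTrans.congr_app S.zero (P.complex.X i))
  have hT : T.ShortExact := shortExact_of_degreewise_shortExact _ fun i ↦ hS (P.complex.X i)
  have rel : (ComplexShape.down ℕ).Rel (n + 1) n := rfl
  have mono_δ : Mono (hT.δ (n + 1) n rel) :=
    hT.mono_δ _ _ _ (h₂.of_iso (leftDerivedObjIsoHomology P _ _).symm)
  let e₁ : (S.X₁.leftDerived n).obj X ≅ T.X₁.homology n := leftDerivedObjIsoHomology P S.X₁ n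
  let e₂ : (S.X₂.leftDerived n).obj X ≅ T.X₂.homology n := leftDerivedObjIsoHomology P S.X₂ n
  let e₃ : (S.X₃.leftDerived (n + 1)).obj X ≅ T.X₃.homology (n + 1) :=
    leftDerivedObjIsoHomology P S.X₃ (n + 1)
  have comm : (NatTrans.leftDerived S.f n).app X ≫ e₂.hom = e₁.hom ≫ homologyMap T.f n :=
    leftDerived_app_comp_leftDerivedObjIsoHomology_hom S.f P n
  let δ := e₃.hom ≫ hT.δ (n + 1) n rel ≫ e₁.inv
  have δ_comp : δ ≫ e₁.hom = e₃.hom ≫ hT.δ (n + 1) n rel := by simp [δ]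
  have zero : δ ≫ (NatTrans.leftDerived S.f n).app X = 0 := by
    rw [← cancel_mono e₂.hom, Category.assoc, comm, reassoc_of% δ_comp, hT.δ_comp, comp_zero,
      zero_comp]
  exact ⟨δ, zero, mono_comp' inferInstance (mono_comp' mono_δ inferInstance),
    ShortComplex.exact_of_iso (ShortComplex.isoMk e₃ e₁ e₂ δ_comp.symm comm.symm).symm
      (hT.homology_exact₁ _ _ rel)⟩

lemma leftDerived_zero_comp_fromLeftDerivedZero {F G : C ⥤ D} [F.Additive] [G.Additive]
    (α : F ⟶ G) :
    NatTrans.leftDerived α 0 ≫ G.fromLeftDerivedZero = F.fromLeftDerivedZero ≫ α := by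
  ext X
  let P := projectiveResolution X
  let αP := (NatTrans.mapHomologicalComplex α (ComplexShape.down ℕ)).app P.complex
  have factorization (H : C ⥤ D) [H.Additive] : H.fromLeftDerivedZero.app X =
      (leftDerivedObjIsoHomology P H 0).hom ≫ homologyι _ 0 ≫ P.fromLeftDerivedZero' H :=
    P.fromLeftDerivedZero_eq H
  have descend : opcyclesMap αP 0 ≫ P.fromLeftDerivedZero' G =
      P.fromLeftDerivedZero' F ≫ α.app X := by
    rw [← cancel_epi (pOpcycles _ _), p_opcyclesMap_assoc,
      P.pOpcycles_comp_fromLeftDerivedZero', P.pOpcycles_comp_fromLeftDerivedZero'_assoc]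
    exact (α.naturality _).symm
  rw [NatTrans.comp_app, NatTrans.comp_app, factorization F, factorization G,
    reassoc_of% leftDerived_app_comp_leftDerivedObjIsoHomology_hom α P 0,
    homologyι_naturality_assoc, descend, Category.assoc, Category.assoc]

end LeftDerived

section Tor

open Limits MonoidalCategory TensorProduct

variable {A : Type u} [CommRing A]

lemma subsingleton_tor_succ_of_flat (Q N : ModuleCat.{u} A) [Module.Flat A Q] (n : ℕ) :
    Subsingleton (((Tor (ModuleCat.{u} A) (n + 1)).obj Q).obj N) :=
  have : PreservesFiniteLimits ((tensoringLeft (ModuleCat.{u} A)).obj Q) :=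
    inferInstanceAs (PreservesFiniteLimits (tensorLeft Q))
  have : PreservesFiniteColimits ((tensoringLeft (ModuleCat.{u} A)).obj Q) :=
    inferInstanceAs (PreservesFiniteColimits (tensorLeft Q))
  ModuleCat.subsingleton_of_isZero (isZero_leftDerived_obj_succ_of_exact _ N n)

theorem exists_injective_tor_connecting_exact {S : ShortComplex (ModuleCat.{u} A)}
    (hS : S.ShortExact) [Module.Flat A S.X₂] (N : ModuleCat.{u} A) (n : ℕ) :
    ∃ δ : ((Tor (ModuleCat.{u} A) (n + 1)).obj S.X₃).obj N →ₗ[A]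
        ((Tor (ModuleCat.{u} A) n).obj S.X₁).obj N,
      Function.Injective δ ∧
        Function.Exact δ (((Tor (ModuleCat.{u} A) n).map S.f).app N).hom := by
  have tensor_exact (P : ModuleCat.{u} A) [Projective P] :
      (S.map (tensorRight P)).ShortExact := by
    have : Module.Projective A P := (IsProjective.iff_projective P).2 ‹_›
    exact hS.map_of_exact (tensorRight P)
  obtain ⟨δ, zero, mono_δ, exact_δ⟩ := exists_mono_leftDerived_connecting_exact
    (ShortComplex.mk ((tensoringLeft (ModuleCat.{u} A)).map S.f)
      ((tensoringLeft (ModuleCat.{u} A)).map S.g) (S.map (tensoringLeft _)).zero)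
    (fun P _ ↦ tensor_exact P) N n
    (ModuleCat.isZero_iff_subsingleton.2 (subsingleton_tor_succ_of_flat S.X₂ N n))
  exact ⟨δ.hom, (ModuleCat.mono_iff_injective δ).1 mono_δ,
    (ShortComplex.ShortExact.moduleCat_exact_iff_function_exact _).1 exact_δ⟩

/-- The identification `Tor₀(K, N) ≃ K ⊗ N`. -/
noncomputable def torZeroEquiv (K N : ModuleCat.{u} A) :
    ((Tor (ModuleCat.{u} A) 0).obj K).obj N ≃ₗ[A] K ⊗[A] N :=
  have : PreservesFiniteColimits ((tensoringLeft (ModuleCat.{u} A)).obj K) :=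
    inferInstanceAs (PreservesFiniteColimits (tensorLeft K))
  (((tensoringLeft (ModuleCat.{u} A)).obj K).leftDerivedZeroIsoSelf.app N).toLinearEquiv

lemma torZeroEquiv_map {K L : ModuleCat.{u} A} (f : K ⟶ L) (N : ModuleCat.{u} A)
    (t : ((Tor (ModuleCat.{u} A) 0).obj K).obj N) :
    torZeroEquiv L N (((Tor (ModuleCat.{u} A) 0).map f).app N t) =
      f.hom.rTensor N (torZeroEquiv K N t) :=
  LinearMap.congr_fun (congrArg ModuleCat.Hom.hom (NatTrans.congr_app
    (leftDerived_zero_comp_fromLeftDerivedZero ((tensoringLeft (ModuleCat.{u} A)).map f)) N)) t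

end Tor

section ExtComparison

open Abelian

/-- The homology of a short complex of modules, computed by a map `ψ` from the cycles onto another
module whose kernel consists of the boundaries. -/
noncomputable def homologyLinearEquivOfCycles {k : Type*} [Ring k]
    (S : ShortComplex (ModuleCat.{v} k)) {T : Type*} [AddCommGroup T] [Module k T]
    (ψ : LinearMap.ker S.g.hom →ₗ[k] T) (surjective : Function.Surjective ψ)
    (range_eq_ker : LinearMap.range S.moduleCatToCycles = LinearMap.ker ψ) :
    S.homology ≃ₗ[k] T :=
  S.moduleCatHomologyIso.toLinearEquiv ≪≫ₗ Submodule.quotEquivOfEq _ _ range_eq_ker ≪≫ₗ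
    ψ.quotKerEquivOfSurjective surjective

variable {k : Type*} [Ring k] {C : Type*} [Category.{v} C] [Abelian C] [Linear k C] {X Y : C}

section HasExt

variable [HasExt.{w} C]

lemma eq_zero_of_extMk_zero_eq_zero (P : ProjectiveResolution X) (f : P.complex.X 0 ⟶ Y)
    (hf : P.complex.d 1 0 ≫ f = 0) (h : P.extMk f 1 rfl hf = 0) : f = 0 := by
  rw [← P.extEquivCohomologyClass.apply_eq_iff_eq, P.extEquivCohomologyClass_extMk,
    P.extEquivCohomologyClass_zero, CochainComplex.HomComplex.CohomologyClass.mk_eq_zero_iff,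
    CochainComplex.HomComplex.Cocycle.toSingleMk_mem_coboundaries_iff _ _ _ _ _ 1 (by simp)] at h
  obtain ⟨g, hg⟩ := h
  have isZero_X_one : Limits.IsZero (P.cochainComplex.X 1) :=
    P.cochainComplex.isZero_of_isStrictlyLE 0 1 (by simp)
  rw [isZero_X_one.eq_of_src g 0, Limits.comp_zero] at hg
  exact (cancel_epi (P.cochainComplexXIso (-((0 : ℕ) : ℤ)) 0 rfl).hom).1 (by
    rw [← hg, Limits.comp_zero])

lemma smul_extMk (P : ProjectiveResolution X) {n : ℕ} (a : k) (f : P.complex.X n ⟶ Y) (m : ℕ)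
    (hm : n + 1 = m) (hf : P.complex.d m n ≫ f = 0) :
    a • P.extMk f m hm hf = P.extMk (a • f) m hm (by rw [Linear.comp_smul, hf, smul_zero]) := by
  rw [Ext.smul_eq_comp_mk₀, P.extMk_comp_mk₀]
  simp only [Linear.comp_smul, Category.comp_id]

variable (k Y) in
/-- `ProjectiveResolution.extMk` as a linear map on the cocycles of the complex `Hom(P, Y)`. -/
noncomputable def extMkLinearMap (P : ProjectiveResolution X) (n : ℕ) :
    LinearMap.ker ((P.complex.linearYonedaObj k Y).d n (n + 1)).hom →ₗ[k]
      Abelian.Ext.{w} X Y n where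
  toFun z := P.extMk (Y := Y) z.1 (n + 1) rfl z.2
  map_add' _ _ := (P.add_extMk _ _ _ _ _ _).symm
  map_smul' _ _ := (smul_extMk P _ _ _ _ _).symm

lemma extMkLinearMap_surjective (P : ProjectiveResolution X) (n : ℕ) :
    Function.Surjective (extMkLinearMap k Y P n) := fun α ↦
  let ⟨f, hf, hα⟩ := P.extMk_surjective α (n + 1) rfl
  ⟨⟨f, hf⟩, hα⟩

lemma extMkLinearMap_eq_zero_iff (P : ProjectiveResolution X) (n : ℕ)
    (z : LinearMap.ker ((P.complex.linearYonedaObj k Y).d n (n + 1)).hom) :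
    extMkLinearMap k Y P n z = 0 ↔
      ∃ y, (P.complex.linearYonedaObj k Y).d ((ComplexShape.up ℕ).prev n) n y = z.1 := by
  cases n with
  | zero =>
    have no_boundary : (P.complex.linearYonedaObj k Y).d ((ComplexShape.up ℕ).prev 0) 0 = 0 :=
      (P.complex.linearYonedaObj k Y).shape _ _ (Nat.succ_ne_zero _)
    rw [no_boundary]
    refine ⟨fun h ↦ ⟨0, ?_⟩, fun ⟨_, hy⟩ ↦ ?_⟩
    · exact (eq_zero_of_extMk_zero_eq_zero P _ z.2 h).symm
    · rw [show z = 0 from Subtype.ext hy.symm, map_zero]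
  | succ n => exact P.extMk_eq_zero_iff (Y := Y) z.1 _ rfl z.2 _ (by simp)

/-- `Ext` as a left derived functor agrees with `Ext` through the derived category. -/
noncomputable def extLinearEquivAbelianExt [EnoughProjectives C] (X Y : C) (n : ℕ) :
    ((Ext k C n).obj (Opposite.op X)).obj Y ≃ₗ[k] Abelian.Ext.{w} X Y n :=
  let P := projectiveResolution X
  (P.isoExt n Y ≪≫ (P.complex.linearYonedaObj k Y).homologyIsoSc' ((ComplexShape.up ℕ).prev n) n
    (n + 1) rfl (by simp)).toLinearEquiv ≪≫ₗ
  homologyLinearEquivOfCycles _ (extMkLinearMap k Y P n) (extMkLinearMap_surjective P n) (by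
    ext z
    exact (exists_congr fun _ ↦ Subtype.ext_iff).trans (extMkLinearMap_eq_zero_iff P n z).symm)

end HasExt

lemma smul_ext_eq_zero [EnoughProjectives C] {a : k} (ha : a • 𝟙 X = 0) (n : ℕ)
    (t : ((Ext k C n).obj (Opposite.op X)).obj Y) : a • t = 0 := by
  have := HasExt.standard C
  apply (extLinearEquivAbelianExt X Y n).injective
  rw [map_smul, map_zero, ← Ext.mk₀_id_comp (extLinearEquivAbelianExt X Y n t), ← Ext.smul_comp,
    ← Ext.mk₀_smul, ha, Ext.mk₀_zero, Ext.zero_comp]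

end ExtComparison

section TensorEvaluation

open TensorProduct

variable {A : Type*} [CommRing A]

lemma exact_lcomp_of_exact_of_injective [Small.{v} A] {E : Type v} [AddCommGroup E] [Module A E]
    [Module.Injective A E] {U V W : Type*} [AddCommGroup U] [AddCommGroup V] [AddCommGroup W]
    [Module A U] [Module A V] [Module A W] {f : U →ₗ[A] V} {g : V →ₗ[A] W}
    (h : Function.Exact f g) :
    Function.Exact (LinearMap.lcomp A E g) (LinearMap.lcomp A E f) := fun φ ↦ by
  refine ⟨fun hφ ↦ ?_, ?_⟩
  · have ker_le : LinearMap.ker g ≤ LinearMap.ker φ := by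
      rw [h.linearMap_ker_eq]
      rintro _ ⟨u, rfl⟩
      exact LinearMap.congr_fun hφ u
    obtain ⟨ψ, hψ⟩ := Module.Injective.extension_property A E _ _
      ((LinearMap.ker g).liftQ g le_rfl)
      (LinearMap.ker_eq_bot.1 (Submodule.ker_liftQ_eq_bot _ _ _ le_rfl))
      ((LinearMap.ker g).liftQ φ ker_le)
    exact ⟨ψ, LinearMap.ext fun v ↦ LinearMap.congr_fun hψ (Submodule.Quotient.mk v)⟩
  · rintro ⟨ψ, rfl⟩
    exact LinearMap.ext fun u ↦ by simp [h.apply_apply_eq_zero]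

variable {E K L X : Type*} [AddCommGroup E] [Module A E] [AddCommGroup K] [Module A K]
  [AddCommGroup L] [Module A L] [AddCommGroup X] [Module A X]

variable (A E K X) in
/-- The evaluation map `K ⊗ Hom(X, E) → Hom(Hom(K, X), E)`, sending `x ⊗ φ` to `g ↦ φ (g x)`. -/
noncomputable def tensorHomEval : K ⊗[A] (X →ₗ[A] E) →ₗ[A] ((K →ₗ[A] X) →ₗ[A] E) :=
  lift ((LinearMap.llcomp A (K →ₗ[A] X) X E).flip ∘ₗ LinearMap.applyₗ)

@[simp]
lemma tensorHomEval_tmul (x : K) (φ : X →ₗ[A] E) (g : K →ₗ[A] X) :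
    tensorHomEval A E K X (x ⊗ₜ φ) g = φ (g x) := rfl

lemma tensorHomEval_comp_rTensor (f : K →ₗ[A] L) :
    tensorHomEval A E L X ∘ₗ f.rTensor (X →ₗ[A] E) =
      LinearMap.lcomp A E (LinearMap.lcomp A X f) ∘ₗ tensorHomEval A E K X := by
  ext
  simp

lemma bijective_tensorHomEval_of_free [Module.Free A K] [Module.Finite A K] :
    Function.Bijective (tensorHomEval A E K X) := by
  let b := Module.Free.chooseBasis A K
  let component (i) : X →ₗ[A] (K →ₗ[A] X) := LinearMap.smulRightₗ (b.coord i)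
  let inverse (ψ : (K →ₗ[A] X) →ₗ[A] E) : K ⊗[A] (X →ₗ[A] E) := ∑ i, b i ⊗ₜ (ψ ∘ₗ component i)
  have left_inv : Function.LeftInverse inverse (tensorHomEval A E K X) := fun t ↦ by
    induction t with
    | zero => simp [inverse]
    | add s t hs ht =>
      simpa only [inverse, map_add, LinearMap.add_comp, tmul_add, Finset.sum_add_distrib]
        using congr($hs + $ht)
    | tmul x φ =>
      have eval_component (i) :
          tensorHomEval A E K X (x ⊗ₜ φ) ∘ₗ component i = b.repr x i • φ := by
        ext
        simp [component]
      simp only [inverse, eval_component, ← smul_tmul, ← sum_tmul, b.sum_repr]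
  have right_inv : Function.RightInverse inverse (tensorHomEval A E K X) := fun ψ ↦ by
    ext g
    have expand : ∑ i, component i (g (b i)) = g := b.ext fun j ↦ by
      classical simp [component, LinearMap.sum_apply, Finsupp.single_apply]
    simp only [inverse, map_sum, LinearMap.sum_apply, tensorHomEval_tmul, LinearMap.comp_apply]
    rw [← map_sum, expand]
  exact ⟨left_inv.injective, right_inv.surjective⟩

theorem bijective_tensorHomEval [Small.{w} A] {E : Type w} [AddCommGroup E] [Module A E]
    [Module.Injective A E] [Module.FinitePresentation A K] :
    Function.Bijective (tensorHomEval A E K X) := by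
  obtain ⟨n, m, f, g, surjective_f, exact_gf⟩ := Module.FinitePresentation.exists_fin' A K
  exact LinearMap.bijective_of_surjective_of_bijective_of_right_exact
    (g.rTensor (X →ₗ[A] E)) (f.rTensor (X →ₗ[A] E))
    (LinearMap.lcomp A E (LinearMap.lcomp A X g)) (LinearMap.lcomp A E (LinearMap.lcomp A X f))
    (tensorHomEval A E _ X) (tensorHomEval A E _ X) (tensorHomEval A E K X)
    (tensorHomEval_comp_rTensor g).symm (tensorHomEval_comp_rTensor f).symm
    (rTensor_exact _ exact_gf surjective_f)
    (exact_lcomp_of_exact_of_injective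
      (LinearMap.exact_lcomp_of_exact_of_surjective X exact_gf surjective_f))
    bijective_tensorHomEval_of_free.surjective bijective_tensorHomEval_of_free
    (LinearMap.rTensor_surjective _ surjective_f)
    (Module.Injective.extension_property A E _ _ _
      (LinearMap.lcomp_injective_of_surjective f surjective_f))

end TensorEvaluation

section TorExtDuality

open Abelian

/-- The isomorphism induced on kernels by a commutative square whose left side is an isomorphism and
whose right side is injective, for kernels given as the injective ends of exact sequences. -/
noncomputable def linearEquivOfExactOfComm {A U V W U' V' W' : Type*} [Ring A]
    [AddCommGroup U] [AddCommGroup V] [AddCommGroup W] [AddCommGroup U'] [AddCommGroup V']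
    [AddCommGroup W'] [Module A U] [Module A V] [Module A W] [Module A U'] [Module A V']
    [Module A W'] {i : U →ₗ[A] V} {f : V →ₗ[A] W} {i' : U' →ₗ[A] V'} {f' : V' →ₗ[A] W'}
    (hi : Function.Injective i) (hif : Function.Exact i f)
    (hi' : Function.Injective i') (hif' : Function.Exact i' f') (e : V ≃ₗ[A] V')
    {j : W →ₗ[A] W'} (hj : Function.Injective j) (comm : f' ∘ₗ e.toLinearMap = j ∘ₗ f) :
    U ≃ₗ[A] U' :=
  have map_range : (LinearMap.range i).map e.toLinearMap = LinearMap.range i' := by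
    rw [← hif.linearMap_ker_eq, ← hif'.linearMap_ker_eq,
      ← LinearMap.ker_comp_of_ker_eq_bot f (LinearMap.ker_eq_bot.2 hj), ← comm,
      LinearMap.ker_comp, Submodule.map_comap_eq_of_surjective e.surjective]
  .ofInjective i hi ≪≫ₗ e.ofSubmodules _ _ map_range ≪≫ₗ (LinearEquiv.ofInjective i' hi').symm

lemma exact_precomp_mk₀_precomp_extClass (k : Type*) [CommRing k] {C : Type*} [Category.{v} C]
    [Abelian C] [Linear k C] [HasExt.{w} C] {S : ShortComplex C} (hS : S.ShortExact) (Y : C)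
    (n : ℕ) :
    Function.Exact ((Ext.mk₀ S.f).precompOfLinear k Y (zero_add n))
      (hS.extClass.precompOfLinear k Y (add_comm 1 n)) := fun α ↦ by
  refine ⟨Ext.contravariant_sequence_exact₁ hS Y α (add_comm 1 n), ?_⟩
  rintro ⟨β, rfl⟩
  exact hS.extClass_comp_assoc β (h := add_comm 1 n)

variable {A : Type u} [CommRing A] {E : Type u} [AddCommGroup E] [Module A E]

theorem nonempty_tor_succ_equiv_ext_dual {S : ShortComplex (ModuleCat.{u} A)} (hS : S.ShortExact)
    [Projective S.X₂] (X : ModuleCat.{u} A) (n : ℕ)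
    (e₁ : ((Tor (ModuleCat.{u} A) n).obj S.X₁).obj (.of A (X →ₗ[A] E)) ≃ₗ[A]
      (Abelian.Ext.{u} S.X₁ X n →ₗ[A] E))
    {j₂ : ((Tor (ModuleCat.{u} A) n).obj S.X₂).obj (.of A (X →ₗ[A] E)) →ₗ[A]
      (Abelian.Ext.{u} S.X₂ X n →ₗ[A] E)} (hj₂ : Function.Injective j₂)
    (comm : LinearMap.lcomp A E ((Ext.mk₀ S.f).precompOfLinear A X (zero_add n)) ∘ₗ
      e₁.toLinearMap = j₂ ∘ₗ (((Tor (ModuleCat.{u} A) n).map S.f).app _).hom) :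
    Nonempty (((Tor (ModuleCat.{u} A) (n + 1)).obj S.X₃).obj (.of A (X →ₗ[A] E)) ≃ₗ[A]
      (Abelian.Ext.{u} S.X₃ X (n + 1) →ₗ[A] E)) := by
  have : Module.Projective A S.X₂ := (IsProjective.iff_projective _).2 ‹_›
  obtain ⟨δ, injective_δ, exact_δ⟩ := exists_injective_tor_connecting_exact hS
    (.of A (X →ₗ[A] E)) n
  have surjective_precomp : Function.Surjective
      (hS.extClass.precompOfLinear A X (add_comm 1 n)) :=
    precomp_extClass_surjective_of_projective_X₂ X hS n
  exact ⟨linearEquivOfExactOfComm injective_δ exact_δ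
    (LinearMap.lcomp_injective_of_surjective _ surjective_precomp)
    (LinearMap.exact_lcomp_of_exact_of_surjective E
      (exact_precomp_mk₀_precomp_extClass A hS X n) surjective_precomp) e₁ hj₂ comm⟩

section DegreeZero

variable [Module.Injective A E]

/-- The duality `Tor₀(K, Hom(X, E)) ≃ Hom(Ext⁰(K, X), E)`, induced by `tensorHomEval`. -/
noncomputable def torZeroEquivExtDual (K X : ModuleCat.{u} A) [Module.FinitePresentation A K] :
    ((Tor (ModuleCat.{u} A) 0).obj K).obj (.of A (X →ₗ[A] E)) ≃ₗ[A]
      (Abelian.Ext.{u} K X 0 →ₗ[A] E) :=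
  torZeroEquiv K _ ≪≫ₗ LinearEquiv.ofBijective (tensorHomEval A E K X) bijective_tensorHomEval ≪≫ₗ
    LinearEquiv.congrLeft E A (Ext.linearEquiv₀.trans ModuleCat.homLinearEquiv).symm

lemma torZeroEquivExtDual_apply_mk₀ {K X : ModuleCat.{u} A} [Module.FinitePresentation A K]
    (t : ((Tor (ModuleCat.{u} A) 0).obj K).obj (.of A (X →ₗ[A] E))) (g : K ⟶ X) :
    torZeroEquivExtDual K X t (Ext.mk₀ g) =
      tensorHomEval A E K X (torZeroEquiv K _ t) g.hom :=
  congr(tensorHomEval A E K X (torZeroEquiv K _ t)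
    ($(Ext.linearEquiv₀.apply_symm_apply (R := A) g)).hom)

lemma torZeroEquivExtDual_naturality {K L : ModuleCat.{u} A} (f : K ⟶ L) (X : ModuleCat.{u} A)
    [Module.FinitePresentation A K] [Module.FinitePresentation A L] :
    LinearMap.lcomp A E ((Ext.mk₀ f).precompOfLinear A X (zero_add 0)) ∘ₗ
        (torZeroEquivExtDual K X).toLinearMap =
      (torZeroEquivExtDual L X).toLinearMap ∘ₗ (((Tor (ModuleCat.{u} A) 0).map f).app _).hom := by
  ext t α
  obtain ⟨g, rfl⟩ := (Ext.mk₀_bijective L X).surjective α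
  calc torZeroEquivExtDual K X t ((Ext.mk₀ f).comp (Ext.mk₀ g) (zero_add 0))
    _ = tensorHomEval A E K X (torZeroEquiv K _ t) (g.hom ∘ₗ f.hom) := by
      rw [Ext.mk₀_comp_mk₀, torZeroEquivExtDual_apply_mk₀, ModuleCat.hom_comp]
    _ = tensorHomEval A E L X (f.hom.rTensor _ (torZeroEquiv K _ t)) g.hom :=
      congr($(tensorHomEval_comp_rTensor f.hom) (torZeroEquiv K _ t) g.hom).symm
    _ = torZeroEquivExtDual L X (((Tor (ModuleCat.{u} A) 0).map f).app _ t) (Ext.mk₀ g) := by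
      rw [torZeroEquivExtDual_apply_mk₀, torZeroEquiv_map]

end DegreeZero

theorem nonempty_tor_equiv_ext_dual [IsNoetherianRing A] [Module.Injective A E]
    (K X : ModuleCat.{u} A) [Module.Finite A K] (n : ℕ) :
    Nonempty (((Tor (ModuleCat.{u} A) n).obj K).obj (.of A (X →ₗ[A] E)) ≃ₗ[A]
      (Abelian.Ext.{u} K X n →ₗ[A] E)) := by
  induction n generalizing K with
  | zero =>
    have := Module.finitePresentation_of_finite A K
    exact ⟨torZeroEquivExtDual K X⟩
  | succ n ih =>
    obtain ⟨Q, _, _, _, _, f, surjective_f⟩ := Module.exists_finite_presentation A K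
    let S := f.shortComplexKer
    have hS : S.ShortExact := LinearMap.shortExact_shortComplexKer surjective_f
    have : Projective S.X₂ :=
      (IsProjective.iff_projective _).1 (inferInstanceAs (Module.Projective A Q))
    have : Module.Finite A S.X₁ := inferInstanceAs (Module.Finite A (LinearMap.ker f))
    have : Module.Finite A S.X₂ := inferInstanceAs (Module.Finite A Q)
    cases n with
    | zero =>
      have := Module.finitePresentation_of_finite A S.X₁
      have := Module.finitePresentation_of_finite A S.X₂
      exact nonempty_tor_succ_equiv_ext_dual hS X 0 (torZeroEquivExtDual S.X₁ X)
        (torZeroEquivExtDual S.X₂ X).injective (torZeroEquivExtDual_naturality S.f X)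
    | succ n =>
      obtain ⟨e₁⟩ := ih S.X₁
      obtain ⟨e₂⟩ := ih S.X₂
      have : Subsingleton (Abelian.Ext.{u} S.X₂ X (n + 1)) :=
        subsingleton_of_forall_eq 0 Ext.eq_zero_of_projective
      exact nonempty_tor_succ_equiv_ext_dual hS X (n + 1) e₁ e₂.injective
        (LinearMap.ext fun _ ↦ Subsingleton.elim _ _)

end TorExtDuality

section ChangeOfRings

lemma exists_restrictScalars_equiv {A k : Type*} [CommRing A] [CommRing k] [Algebra A k]
    (hs : Function.Surjective (algebraMap A k)) (T : Type v) [AddCommGroup T] [Module A T]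
    (hT : ∀ a, algebraMap A k a = 0 → ∀ t : T, a • t = 0) :
    ∃ (W : Type v) (_ : AddCommGroup W) (_ : Module k W),
      Nonempty (RestrictScalars A k W ≃ₗ[A] T) := by
  have torsion : Module.IsTorsionBySet A T (RingHom.ker (algebraMap A k)) := fun t a ↦ hT a a.2 t
  let moduleQuotient : Module (A ⧸ RingHom.ker (algebraMap A k)) T := torsion.module
  let e := RingHom.quotientKerEquivOfSurjective hs
  let moduleT : Module k T := Module.compHom T e.symm.toRingHom
  exact ⟨T, inferInstance, moduleT, ⟨{ AddEquiv.refl T with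
    map_smul' := fun a (t : T) ↦ congrArg (· • t) (e.symm_apply_apply (Ideal.Quotient.mk _ a)) }⟩⟩

variable {R} {A : Type u} [CommRing A] [Algebra R A] {E : Type u} [AddCommGroup E] [Module R E]

lemma isScalarTower_hom_domSMul_left (X : Type u) [AddCommGroup X] [Module R X] [Module A X]
    [IsScalarTower R A X] : IsScalarTower R A (X →ₗ[R] E) where
  smul_assoc r a φ := LinearMap.ext fun x ↦ by
    change φ ((r • a) • x) = r • φ (a • x)
    rw [smul_assoc, map_smul]

lemma isScalarTower_hom_domSMul (B X : Type u) [CommRing B] [Algebra R B] [Algebra A B]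
    [AddCommGroup X] [Module R X] [Module A X] [Module B X] [IsScalarTower R A X]
    [IsScalarTower R B X] [IsScalarTower A B X] : IsScalarTower A B (X →ₗ[R] E) where
  smul_assoc a b φ := LinearMap.ext fun x ↦ by
    change φ ((a • b) • x) = φ (b • a • x)
    rw [smul_assoc, smul_comm]

/-- The adjunction between restriction and coextension of scalars along `R → A`, sending `φ` to
`x ↦ (a ↦ φ (a • x))`. -/
noncomputable def homCoextendEquiv (X : Type u) [AddCommGroup X] [Module R X] [Module A X]
    [IsScalarTower R A X] : (X →ₗ[R] E) ≃ₗ[A] (X →ₗ[A] (A →ₗ[R] E)) where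
  toFun φ :=
    { toFun := fun x ↦ φ ∘ₗ (LinearMap.toSpanSingleton A X x).restrictScalars R
      map_add' := fun x y ↦ by ext a; simp
      map_smul' := fun b x ↦ LinearMap.ext fun a ↦ congrArg φ (by
        change a • b • x = (b * a) • x
        rw [mul_comm, mul_smul]) }
  map_add' _ _ := rfl
  map_smul' a φ := LinearMap.ext fun x ↦ LinearMap.ext fun b ↦ congrArg φ (mul_smul a b x).symm
  invFun ψ :=
    { toFun := fun x ↦ ψ x 1
      map_add' := fun x y ↦ by rw [map_add, LinearMap.add_apply]
      map_smul' := fun r x ↦ by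
        have := isScalarTower_hom_domSMul_left (R := R) (A := A) (E := E) A
        rw [LinearMap.map_smul_of_tower, LinearMap.smul_apply, RingHom.id_apply] }
  left_inv φ := LinearMap.ext fun x ↦ congrArg φ (one_smul A x)
  right_inv ψ := LinearMap.ext fun x ↦ LinearMap.ext fun a ↦ by
    change ψ (a • x) 1 = ψ x a
    rw [map_smul]
    exact congrArg (ψ x) (mul_one a)

theorem injective_hom_of_injective [Module.Injective R E] : Module.Injective A (A →ₗ[R] E) := by
  refine ⟨fun X Y _ _ _ _ f injective_f ψ ↦ ?_⟩
  let : Module R X := Module.compHom X (algebraMap R A)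
  let : Module R Y := Module.compHom Y (algebraMap R A)
  have : IsScalarTower R A X := .of_compHom _ _ _
  have : IsScalarTower R A Y := .of_compHom _ _ _
  obtain ⟨φ, hφ⟩ := Module.Injective.extension_property R E _ _ (f.restrictScalars R) injective_f
    ((homCoextendEquiv X).symm ψ)
  refine ⟨homCoextendEquiv Y φ, fun x ↦ ?_⟩
  calc homCoextendEquiv Y φ (f x)
    _ = homCoextendEquiv X (φ ∘ₗ f.restrictScalars R) x :=
      LinearMap.ext fun a ↦ congrArg φ (map_smul f a x).symm
    _ = ψ x := by rw [hφ, LinearEquiv.apply_symm_apply]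

variable (E) in
/-- The adjunction `Hom_R(A, Hom_R(M, E)) ≃ Hom_A(A ⊗ M, Hom_R(A, E))`, for an arbitrary model `M'`
of the base change `A ⊗ M`. -/
noncomputable def homHomEquivOfIsBaseChange {M M' : Type u} [AddCommGroup M] [Module R M]
    [AddCommGroup M'] [Module R M'] [Module A M'] [IsScalarTower R A M'] {f : M →ₗ[R] M'}
    (hf : IsBaseChange A f) :
    (A →ₗ[R] (M →ₗ[R] E)) ≃ₗ[A] (M' →ₗ[A] (A →ₗ[R] E)) :=
  have := isScalarTower_hom_domSMul_left (R := R) (A := A) (E := E) A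
  let flip : (A →ₗ[R] (M →ₗ[R] E)) ≃ₗ[A] (M →ₗ[R] (A →ₗ[R] E)) :=
    { toFun := LinearMap.flip
      invFun := LinearMap.flip
      map_add' := fun _ _ ↦ rfl
      map_smul' := fun _ _ ↦ rfl }
  flip ≪≫ₗ LinearMap.liftBaseChangeEquiv A ≪≫ₗ LinearEquiv.congrLeft (A →ₗ[R] E) A hf.equiv

variable {k : Type u} [CommRing k] [Algebra R k] [Algebra A k] [IsScalarTower R A k]

variable (E) in
/-- Coextension of scalars turns a direct sum of copies of `k` into a product of copies of
`Hom_R(k, E)`. -/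
noncomputable def homCoextendEquivOfBasis {W ι : Type u} [AddCommMonoid W] [Module k W]
    [Module A W] [IsScalarTower A k W] (b : Module.Basis ι k W) :
    (W →ₗ[A] (A →ₗ[R] E)) ≃ₗ[A] (ι → (k →ₗ[R] E)) :=
  LinearEquiv.congrLeft _ A (b.repr.restrictScalars A) ≪≫ₗ (Finsupp.lsum A).symm ≪≫ₗ
    LinearEquiv.piCongrRight fun _ ↦ (homCoextendEquiv k).symm

end ChangeOfRings

section BassNumbers

variable {R} {A : Type u} [CommRing A] [Algebra R A] [IsNoetherianRing A]
  {E M M' : Type u} [AddCommGroup E] [Module R E] [AddCommGroup M] [Module R M]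
  [AddCommGroup M'] [Module R M'] [Module A M'] [IsScalarTower R A M']
  {f : M →ₗ[R] M'}

lemma nonempty_tor_hom_hom_equiv_ext_dual [Module.Injective R E] (hf : IsBaseChange A f)
    (K : ModuleCat.{u} A) [Module.Finite A K] (i : ℕ) :
    Nonempty (((Tor (ModuleCat.{u} A) i).obj K).obj (.of A (A →ₗ[R] (M →ₗ[R] E))) ≃ₗ[A]
      (((Ext A (ModuleCat.{u} A) i).obj (.op K)).obj (.of A M') →ₗ[A] (A →ₗ[R] E))) := by
  have : Module.Injective A (A →ₗ[R] E) := injective_hom_of_injective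
  obtain ⟨duality⟩ := nonempty_tor_equiv_ext_dual (E := A →ₗ[R] E) K (.of A M') i
  exact ⟨(((Tor (ModuleCat.{u} A) i).obj K).mapIso
      (homHomEquivOfIsBaseChange E hf).toModuleIso).toLinearEquiv ≪≫ₗ duality ≪≫ₗ
    LinearEquiv.congrLeft _ A (extLinearEquivAbelianExt K (.of A M') i).symm⟩

theorem tor_dual_iso_prod_hom_pow_bass_general {k : Type u} [Field k] [Algebra R k] [Algebra A k]
    [IsScalarTower R A k] (hs : Function.Surjective (algebraMap A k)) (hE : Module.Injective R E)
    (hf : IsBaseChange A f) (i : ℕ) :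
    (∃ (W : Type u) (_ : AddCommGroup W) (_ : Module k W),
      Nonempty (RestrictScalars A k W ≃ₗ[A]
        ((Ext A (ModuleCat.{u} A) i).obj (.op (.of A k))).obj (.of A M'))) ∧
    (∃ (V : Type u) (_ : AddCommGroup V) (_ : Module k V),
      Nonempty (RestrictScalars A k V ≃ₗ[A]
        ((Tor (ModuleCat.{u} A) i).obj (.of A k)).obj (.of A (A →ₗ[R] (M →ₗ[R] E))))) ∧
    (∀ (W : Type u) (_ : AddCommGroup W) (_ : Module k W),
      Nonempty (RestrictScalars A k W ≃ₗ[A]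
        ((Ext A (ModuleCat.{u} A) i).obj (.op (.of A k))).obj (.of A M')) →
      ∀ (V : Type u) (_ : AddCommGroup V) (_ : Module k V),
        Nonempty (RestrictScalars A k V ≃ₗ[A]
          ((Tor (ModuleCat.{u} A) i).obj (.of A k)).obj (.of A (A →ₗ[R] (M →ₗ[R] E)))) →
        ∃ ι : Type u, Cardinal.mk ι = Module.rank k W ∧ Nonempty (V ≃ₗ[k] (ι → (k →ₗ[R] E))) ∧
          Module.rank k V = Module.rank k (ι → (k →ₗ[R] E))) := by
  have : Module.Finite A k := .of_surjective (Algebra.linearMap A k) hs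
  obtain ⟨duality⟩ := nonempty_tor_hom_hom_equiv_ext_dual (E := E) hf (.of A k) i
  have smul_ext (a : A) (ha : algebraMap A k a = 0)
      (α : ((Ext A (ModuleCat.{u} A) i).obj (.op (.of A k))).obj (.of A M')) : a • α = 0 :=
    smul_ext_eq_zero (by ext; simp [Algebra.smul_def, ha]) i α
  refine ⟨exists_restrictScalars_equiv hs _ smul_ext,
    exists_restrictScalars_equiv hs _ fun a ha t ↦ duality.injective ?_, ?_⟩
  · ext α : 1
    rw [map_smul, map_zero, LinearMap.smul_apply, ← map_smul, smul_ext a ha, map_zero,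
      LinearMap.zero_apply]
  · rintro W _ _ ⟨eW⟩ V _ _ ⟨eV⟩
    have := isScalarTower_hom_domSMul (R := R) (A := A) (E := E) k k
    let b := Module.Free.chooseBasis k W
    let e : RestrictScalars A k V ≃ₗ[A] (Module.Free.ChooseBasisIndex k W → (k →ₗ[R] E)) :=
      eV ≪≫ₗ duality ≪≫ₗ LinearEquiv.congrLeft _ A eW.symm ≪≫ₗ
        homCoextendEquivOfBasis E (W := RestrictScalars A k W) b
    let eₖ : V ≃ₗ[k] (Module.Free.ChooseBasisIndex k W → (k →ₗ[R] E)) :=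
      LinearEquiv.extendScalarsOfSurjective (M := RestrictScalars A k V) hs e
    exact ⟨_, b.mk_eq_rank'', ⟨eₖ⟩, eₖ.rank_eq⟩

end BassNumbers

/-- For a prime `𝔭` of a commutative Noetherian ring, an injective
module `E` and a module `M`, for all `i ≥ 0` the `k(𝔭)`-vector space
`Tor_i^{R_𝔭}(k(𝔭), Hom_R(R_𝔭, Hom_R(M, E)))` is isomorphic to a direct product of
copies of `Hom_R(k(𝔭), E)` indexed by a set of cardinality
`μ_i(𝔭, M) = dim_{k(𝔭)} Ext^i_{R_𝔭}(k(𝔭), M_𝔭)`; in particular its `k(𝔭)`-dimension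
equals the `k(𝔭)`-dimension of this direct product. -/
theorem tor_dual_iso_prod_hom_pow_bass [IsNoetherianRing R]
    (𝔭 : Ideal R) [𝔭.IsPrime] (E : Type u) [AddCommGroup E] [Module R E]
    (hE : Module.Injective R E) (M : Type u) [AddCommGroup M] [Module R M] (i : ℕ) :
    (∃ (W : Type u) (_ : AddCommGroup W)
        (_ : Module (IsLocalRing.ResidueField (Localization.AtPrime 𝔭)) W),
        Nonempty ((RestrictScalars (Localization.AtPrime 𝔭)
            (IsLocalRing.ResidueField (Localization.AtPrime 𝔭)) W) ≃ₗ[Localization.AtPrime 𝔭]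
          (((Ext (Localization.AtPrime 𝔭) (ModuleCat.{u} (Localization.AtPrime 𝔭)) i).obj
            (Opposite.op (ModuleCat.of (Localization.AtPrime 𝔭)
              (IsLocalRing.ResidueField (Localization.AtPrime 𝔭))))).obj
            (ModuleCat.of (Localization.AtPrime 𝔭) (LocalizedModule 𝔭.primeCompl M))))) ∧
    (∃ (V : Type u) (_ : AddCommGroup V)
        (_ : Module (IsLocalRing.ResidueField (Localization.AtPrime 𝔭)) V),
        Nonempty ((RestrictScalars (Localization.AtPrime 𝔭)
            (IsLocalRing.ResidueField (Localization.AtPrime 𝔭)) V) ≃ₗ[Localization.AtPrime 𝔭]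
          (((Tor (ModuleCat.{u} (Localization.AtPrime 𝔭)) i).obj
            (ModuleCat.of (Localization.AtPrime 𝔭)
              (IsLocalRing.ResidueField (Localization.AtPrime 𝔭)))).obj
            (ModuleCat.of (Localization.AtPrime 𝔭)
              (Localization.AtPrime 𝔭 →ₗ[R] (M →ₗ[R] E)))))) ∧
    (∀ (W : Type u) (_ : AddCommGroup W)
        (_ : Module (IsLocalRing.ResidueField (Localization.AtPrime 𝔭)) W),
      Nonempty ((RestrictScalars (Localization.AtPrime 𝔭)
            (IsLocalRing.ResidueField (Localization.AtPrime 𝔭)) W) ≃ₗ[Localization.AtPrime 𝔭]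
          (((Ext (Localization.AtPrime 𝔭) (ModuleCat.{u} (Localization.AtPrime 𝔭)) i).obj
            (Opposite.op (ModuleCat.of (Localization.AtPrime 𝔭)
              (IsLocalRing.ResidueField (Localization.AtPrime 𝔭))))).obj
            (ModuleCat.of (Localization.AtPrime 𝔭) (LocalizedModule 𝔭.primeCompl M)))) →
      ∀ (V : Type u) (_ : AddCommGroup V)
          (_ : Module (IsLocalRing.ResidueField (Localization.AtPrime 𝔭)) V),
        Nonempty ((RestrictScalars (Localization.AtPrime 𝔭)
              (IsLocalRing.ResidueField (Localization.AtPrime 𝔭)) V) ≃ₗ[Localization.AtPrime 𝔭]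
            (((Tor (ModuleCat.{u} (Localization.AtPrime 𝔭)) i).obj
              (ModuleCat.of (Localization.AtPrime 𝔭)
                (IsLocalRing.ResidueField (Localization.AtPrime 𝔭)))).obj
              (ModuleCat.of (Localization.AtPrime 𝔭)
                (Localization.AtPrime 𝔭 →ₗ[R] (M →ₗ[R] E))))) →
        ∃ ι : Type u,
          Cardinal.mk ι = Module.rank (IsLocalRing.ResidueField (Localization.AtPrime 𝔭)) W ∧
          Nonempty (V ≃ₗ[IsLocalRing.ResidueField (Localization.AtPrime 𝔭)]
            (ι → (IsLocalRing.ResidueField (Localization.AtPrime 𝔭) →ₗ[R] E))) ∧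
          Module.rank (IsLocalRing.ResidueField (Localization.AtPrime 𝔭)) V =
            Module.rank (IsLocalRing.ResidueField (Localization.AtPrime 𝔭))
              (ι → (IsLocalRing.ResidueField (Localization.AtPrime 𝔭) →ₗ[R] E))) := by
  have : IsNoetherianRing (Localization.AtPrime 𝔭) :=
    IsLocalization.isNoetherianRing 𝔭.primeCompl _ inferInstance
  exact tor_dual_iso_prod_hom_pow_bass_general IsLocalRing.residue_surjective hE
    (IsLocalizedModule.isBaseChange 𝔭.primeCompl (Localization.AtPrime 𝔭)
      (LocalizedModule.mkLinearMap 𝔭.primeCompl M)) i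
end

section
/- Let (R, m) be a Noetherian local ring such that R is not m-adically complete or dim R ≥ 2. Then there exists an injective envelope i : M → I of R-modules with M Matlis reflexive and I not Matlis reflexive; for such an i, the Matlis dual i^∨ is a flat cover but (i^∨)^∨ is not an injective envelope. -/
universe u

variable (R : Type u) [CommRing R]

/-- Given a module `D` (to be thought of as `⊕ E(R/𝔫)`, the direct sum of injective
envelopes of the residue fields of all maximal ideals, so that `Hom_R(-, D)` is the
Matlis dual), a module `M` is Matlis reflexive if the evaluation map
`M → Hom_R(Hom_R(M, D), D)` is an isomorphism. -/
def IsMatlisReflexive (D : Type u) [AddCommGroup D] [Module R D]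
    (M : Type u) [AddCommGroup M] [Module R M] : Prop :=
  Function.Bijective (LinearMap.applyₗ : M →ₗ[R] ((M →ₗ[R] D) →ₗ[R] D))


/-!
If `M` is reflexive and `i : M → I` is an injective envelope whose double dual is again one, then
`M = M^∨^∨` is essential in `I^∨^∨`; hence so is the larger submodule `I`, which splits off because
it is injective, so `I = I^∨^∨` is reflexive.

The dual of a monomorphism into an injective module is a flat precover by tensor-hom adjunction.
If `i` is essential and `h` is an endomorphism of `I^∨` over `M^∨`, consider the submodules
`L ≤ I` such that `h` induces a bijection on `L^∨`; they are closed under directed unions, and each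
`L ≠ I` of this kind can be enlarged because some `v ∉ L` satisfies `(h f) v = f v` for every
`f` vanishing on `L`. So `h` is bijective.

Reflexive modules are linearly compact. Reflexivity of `E(k) = R^∨` would imply that of `R`, hence
completeness, so `k → E(k)` is an example when `R` is not complete.

If `R` is complete, then `R` and its quotients are reflexive. In dimension at least `2` there are
primes `p < P` and `p ≤ q` with elements `x ∈ P \ q` and `y ∈ q \ P`. Linear compactness of `R`
yields a rapidly increasing sequence `e n` such that no element of `y ^ e n + x R` is divisible
by `y ^ e (n + 1)` in the localization of `R ⧸ p` at `q`. The elements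
`z n = y ^ e n / x ^ n` of `E(R ⧸ p)` are then linearly independent modulo `𝔪`, in the sense that
every linear relation between them has all its coefficients in `𝔪`. This contradicts linear
compactness of `E(R ⧸ p)`: the partial sums of the `z n` would have a limit involving only finitely
many terms.
-/

section

variable {R}

section InjectiveModules

variable {E : Type u} [AddCommGroup E] [Module R E] [Module.Injective R E]
  {X Y : Type*} [AddCommGroup X] [Module R X] [AddCommGroup Y] [Module R Y]

theorem exists_comp_eq_of_ker_le {g : X →ₗ[R] Y} {f : X →ₗ[R] E}
    (h : LinearMap.ker g ≤ LinearMap.ker f) : ∃ k : Y →ₗ[R] E, k ∘ₗ g = f := by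
  obtain ⟨k, hk⟩ := Module.Injective.extension_property R E _ _ ((LinearMap.ker g).liftQ g le_rfl)
    (LinearMap.ker_eq_bot.1 (Submodule.ker_liftQ_eq_bot _ _ _ le_rfl)) ((LinearMap.ker g).liftQ f h)
  refine ⟨k, LinearMap.ext fun x => ?_⟩
  exact LinearMap.congr_fun hk (Submodule.Quotient.mk x)

theorem exists_le_ker_sub_of_monotone {ι : Type*} [Preorder ι] [IsDirectedOrder ι]
    {L : ι → Submodule R X} (hL : Monotone L) {G : ι → X →ₗ[R] E}
    (hG : ∀ i j, i ≤ j → L i ≤ LinearMap.ker (G i - G j)) :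
    ∃ φ : X →ₗ[R] E, ∀ i, L i ≤ LinearMap.ker (φ - G i) := by
  let T : ι → X →ₗ.[R] E := fun i => ⟨L i, G i ∘ₗ (L i).subtype⟩
  have hT : Monotone T := fun i j hij => by
    refine ⟨hL hij, ?_⟩
    rintro ⟨x, hx⟩ ⟨_, _⟩ rfl
    exact sub_eq_zero.1 (hG i j hij hx)
  have hdir : DirectedOn (· ≤ ·) (Set.range T) := directedOn_range.2 hT.directed_le
  obtain ⟨φ, hφ⟩ := Module.Injective.extension_property R E _ _
    (LinearPMap.sSup _ hdir).domain.subtype (Submodule.subtype_injective _)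
    (LinearPMap.sSup _ hdir).toFun
  refine ⟨φ, fun i x hx => ?_⟩
  have hle := LinearPMap.le_sSup hdir ⟨i, rfl⟩
  have hGi : G i x = LinearPMap.sSup _ hdir ⟨x, hle.1 hx⟩ := hle.2 (x := ⟨x, hx⟩) rfl
  have hφx : φ x = LinearPMap.sSup _ hdir ⟨x, hle.1 hx⟩ := LinearMap.congr_fun hφ ⟨x, hle.1 hx⟩
  rw [LinearMap.mem_ker, LinearMap.sub_apply, hGi, hφx, sub_self]

theorem exists_smul_eq_of_ker_linearCombination_le {ι : Type*} [Fintype ι] {f : ι → R} {v : ι → E}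
    (h : LinearMap.ker (Fintype.linearCombination R f) ≤
      LinearMap.ker (Fintype.linearCombination R v)) : ∃ w : E, ∀ i, f i • w = v i := by
  classical
  obtain ⟨k, hk⟩ := exists_comp_eq_of_ker_le h
  refine ⟨k 1, fun i => ?_⟩
  have hki := LinearMap.congr_fun hk (Pi.single i 1)
  rwa [LinearMap.comp_apply, Fintype.linearCombination_apply_single,
    Fintype.linearCombination_apply_single, one_smul, one_smul, ← mul_one (f i), ← smul_eq_mul,
    map_smul] at hki

theorem exists_smul_eq_of_forall_mul_eq_zero {s : R} {v : E} (h : ∀ r, r * s = 0 → r • v = 0) :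
    ∃ w : E, s • w = v := by
  obtain ⟨w, hw⟩ := exists_smul_eq_of_ker_linearCombination_le (ι := Unit) (f := fun _ => s)
    (v := fun _ => v) fun r hr => by
      simpa [Fintype.linearCombination_apply] using h (r ())
        (by simpa [Fintype.linearCombination_apply] using hr)
  exact ⟨w, hw ()⟩

theorem exists_eq_sum_smul_of_forall {ι κ : Type*} [Fintype ι] [Fintype κ] {s : κ → ι → R}
    {x : ι → X →ₗ[R] E}
    (h : ∀ v : ι → X, (∀ j, ∑ i, s j i • v i = 0) → ∑ i, x i (v i) = 0) :
    ∃ y : κ → X →ₗ[R] E, ∀ i, x i = ∑ j, s j i • y j := by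
  classical
  let g : (ι → X) →ₗ[R] κ → X := LinearMap.pi fun j => ∑ i, s j i • LinearMap.proj i
  obtain ⟨k, hk⟩ := exists_comp_eq_of_ker_le (g := g) (f := ∑ i, x i ∘ₗ LinearMap.proj i)
    fun v hv => by simpa using h v fun j => by simpa [g] using congr_fun hv j
  refine ⟨fun j => k ∘ₗ LinearMap.single R (fun _ => X) j, fun i => LinearMap.ext fun v => ?_⟩
  have hg : g (Pi.single i v) = ∑ j, s j i • Pi.single j v := by
    ext j
    simp [g, Pi.single_apply, apply_ite]
  calc x i v = ∑ l, x l (Pi.single (M := fun _ => X) i v l) := by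
        simp [Pi.single_apply, apply_ite]
    _ = k (g (Pi.single i v)) := by simpa using (LinearMap.congr_fun hk (Pi.single i v)).symm
    _ = _ := by simp [hg]

theorem mem_smul_top_of_forall_smul_eq_zero {J : Ideal R} (hJ : J.FG) {f : X →ₗ[R] E}
    (h : ∀ v, (∀ c ∈ J, c • v = 0) → f v = 0) : f ∈ J • (⊤ : Submodule R (X →ₗ[R] E)) := by
  obtain ⟨n, s, rfl⟩ := Submodule.fg_iff_exists_fin_generating_family.1 hJ
  obtain ⟨y, hy⟩ := exists_eq_sum_smul_of_forall (ι := Unit) (s := fun j _ => s j)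
    (x := fun _ => f) fun v hv => by
      have hsv : Submodule.span R (Set.range s) ≤
          LinearMap.ker (LinearMap.toSpanSingleton R X (v ())) :=
        Submodule.span_le.2 (by rintro _ ⟨j, rfl⟩; simpa using hv j)
      simpa using h (v ()) fun c hc => by simpa using hsv hc
  rw [hy ()]
  exact Submodule.sum_mem _ fun j _ =>
    Submodule.smul_mem_smul (Submodule.subset_span ⟨j, rfl⟩) Submodule.mem_top

end InjectiveModules

section FlatPrecover

variable {E I : Type u} [AddCommGroup E] [Module R E] [Module.Injective R E]
  [AddCommGroup I] [Module R I] [Module.Injective R I]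

theorem flat_linearMap_of_injective [IsNoetherianRing R] : Module.Flat R (I →ₗ[R] E) := by
  refine Module.Flat.of_forall_isTrivialRelation fun {l f x} hfx => ?_
  obtain ⟨n, s, hs⟩ := Submodule.fg_iff_exists_fin_generating_family.1
    (IsNoetherian.noetherian (LinearMap.ker (Fintype.linearCombination R f)))
  obtain ⟨y, hy⟩ := exists_eq_sum_smul_of_forall (s := s) (x := x) fun v hv => by
    obtain ⟨w, hw⟩ := exists_smul_eq_of_ker_linearCombination_le (f := f) (v := v) <| by
      rw [← hs, Submodule.span_le]
      rintro _ ⟨j, rfl⟩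
      exact hv j
    simpa [← hw] using LinearMap.congr_fun hfx w
  refine ⟨n, fun i j => s j i, y, hy, fun j => ?_⟩
  have hsj : s j ∈ LinearMap.ker (Fintype.linearCombination R f) :=
    hs ▸ Submodule.subset_span ⟨j, rfl⟩
  simpa [Fintype.linearCombination_apply, mul_comm] using hsj

theorem isFlatPrecover_lcomp [IsNoetherianRing R] {M : Type u} [AddCommGroup M] [Module R M]
    {i : M →ₗ[R] I} (hi : Function.Injective i) : IsFlatPrecover R (LinearMap.lcomp R E i) := by
  refine ⟨flat_linearMap_of_injective, fun F _ _ hF g => ?_⟩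
  obtain ⟨k, hk⟩ := Module.Injective.extension_property R E _ _ (i.lTensor F)
    (Module.Flat.lTensor_preserves_injective_linearMap i hi) (TensorProduct.lift g)
  refine ⟨TensorProduct.curry k, LinearMap.ext fun x => LinearMap.ext fun m => ?_⟩
  exact LinearMap.congr_fun hk (x ⊗ₜ[R] m)

end FlatPrecover

/-- `A` is an essential submodule: it meets every nonzero submodule nontrivially. This is the
condition that `IsInjectiveEnvelope` puts on the range. -/
def IsEssential {I : Type*} [AddCommGroup I] [Module R I] (A : Submodule R I) : Prop :=
  ∀ N : Submodule R I, N ≠ ⊥ → N ⊓ A ≠ ⊥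

section Essential

variable {I : Type*} [AddCommGroup I] [Module R I] {A : Submodule R I}

theorem IsEssential.exists_smul_mem (hA : IsEssential A) {v : I} (hv : v ≠ 0) :
    ∃ c : R, c • v ∈ A ∧ c • v ≠ 0 := by
  obtain ⟨z, ⟨hzv, hzA⟩, hz⟩ := (Submodule.ne_bot_iff _).1
    (hA (Submodule.span R {v}) (Submodule.span_singleton_eq_bot.not.2 hv))
  obtain ⟨c, rfl⟩ := Submodule.mem_span_singleton.1 hzv
  exact ⟨c, hzA, hz⟩

theorem IsEssential.mono {B : Submodule R I} (hA : IsEssential A) (h : A ≤ B) : IsEssential B :=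
  fun N hN hNB => hA N hN (eq_bot_mono (inf_le_inf_left N h) hNB)

theorem IsEssential.surjective_of_injective {X : Type u} [AddCommGroup X] [Module R X]
    [Module.Injective R X] {f : X →ₗ[R] I} (hess : IsEssential (LinearMap.range f))
    (hf : Function.Injective f) : Function.Surjective f := by
  obtain ⟨ρ, hρ⟩ := Module.Injective.extension_property R X _ _ f hf LinearMap.id
  have hρf : Function.LeftInverse ρ f := LinearMap.congr_fun hρ
  have hker : LinearMap.ker ρ = ⊥ := by
    by_contra hne
    refine hess _ hne ((Submodule.eq_bot_iff _).2 ?_)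
    rintro _ ⟨hx, x, rfl⟩
    rw [← hρf x, LinearMap.mem_ker.1 hx, map_zero]
  exact fun y => ⟨ρ y, LinearMap.ker_eq_bot.1 hker (hρf (ρ y))⟩

end Essential

section FlatCover

variable {E : Type u} [AddCommGroup E] [Module R E] {I : Type*} [AddCommGroup I] [Module R I]

/-- The endomorphism `h` of `Hom(I, E)` induces an automorphism of `Hom(L, E)`, which for injective
`E` is the quotient of `Hom(I, E)` by the maps vanishing on `L`. -/
def InducesBijectionOn (h : (I →ₗ[R] E) →ₗ[R] (I →ₗ[R] E)) (L : Submodule R I) : Prop :=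
  (∀ f, L ≤ LinearMap.ker (h f) ↔ L ≤ LinearMap.ker f) ∧ ∀ f, ∃ g, L ≤ LinearMap.ker (h g - f)

namespace InducesBijectionOn

variable {h : (I →ₗ[R] E) →ₗ[R] (I →ₗ[R] E)} {L : Submodule R I}

theorem bijective (hh : InducesBijectionOn h ⊤) : Function.Bijective h := by
  simp only [InducesBijectionOn, top_le_iff, LinearMap.ker_eq_top, sub_eq_zero] at hh
  exact ⟨(injective_iff_map_eq_zero h).2 fun f => (hh.1 f).1, hh.2⟩

theorem sSup_of_directedOn [Module.Injective R E] {C : Set (Submodule R I)}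
    (hC : DirectedOn (· ≤ ·) C)
    (hh : ∀ L ∈ C, InducesBijectionOn h L) : InducesBijectionOn h (sSup C) := by
  refine ⟨fun f => ?_, fun f => ?_⟩
  · simp only [sSup_le_iff]
    exact forall₂_congr fun L hL => (hh L hL).1 f
  · choose G hG using fun L : C => (hh L L.2).2 f
    have := hC.isDirectedOrder
    obtain ⟨g, hg⟩ := exists_le_ker_sub_of_monotone (Subtype.mono_coe (· ∈ C)) fun L L' hLL' => by
      rw [← (hh L L.2).1, map_sub]
      intro x hx
      have h₁ := hG L hx
      have h₂ := hG L' (hLL' hx)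
      simp only [LinearMap.mem_ker, LinearMap.sub_apply, sub_eq_zero] at h₁ h₂ ⊢
      rw [h₁, h₂]
    refine ⟨g, sSup_le fun L hL x hx => ?_⟩
    have h₁ := ((hh L hL).1 (g - G ⟨L, hL⟩)).2 (hg ⟨L, hL⟩) hx
    have h₂ := hG ⟨L, hL⟩ hx
    simp only [map_sub, LinearMap.mem_ker, LinearMap.sub_apply, sub_eq_zero] at h₁ h₂ ⊢
    rw [h₁, h₂]

theorem le_iInf_ker_sub (hh : InducesBijectionOn h L) :
    L ≤ ⨅ (f) (_ : L ≤ LinearMap.ker f), LinearMap.ker (h f - f) :=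
  le_iInf₂ fun f hf _ hx =>
    sub_eq_zero.2 (((hh.1 f).2 hf hx).trans (LinearMap.mem_ker.1 (hf hx)).symm)

theorem iInf_ker_sub (hh : InducesBijectionOn h L) :
    InducesBijectionOn h (⨅ (f) (_ : L ≤ LinearMap.ker f), LinearMap.ker (h f - f)) := by
  set L' := ⨅ (f) (_ : L ≤ LinearMap.ker f), LinearMap.ker (h f - f) with hL'
  have h_apply {f : I →ₗ[R] E} (hf : L ≤ LinearMap.ker f) {x : I} (hx : x ∈ L') : h f x = f x := by
    simp only [hL', Submodule.mem_iInf] at hx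
    exact sub_eq_zero.1 (hx f hf)
  have hle : L ≤ L' := hh.le_iInf_ker_sub
  refine ⟨fun f => ⟨fun hf x hx => ?_, fun hf x hx => ?_⟩, fun f => ?_⟩
  · rw [LinearMap.mem_ker, ← h_apply ((hh.1 f).1 (hle.trans hf)) hx]
    exact hf hx
  · rw [LinearMap.mem_ker, h_apply (hle.trans hf) hx]
    exact hf hx
  · obtain ⟨g, hg⟩ := hh.2 f
    -- `h` fixes `h g - f` on `L'`, because `h g - f` vanishes on `L`.
    refine ⟨g - (h g - f), fun x hx => ?_⟩
    have hx' := h_apply hg hx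
    simp only [map_sub, LinearMap.sub_apply, LinearMap.mem_ker] at hx' ⊢
    rw [hx']
    abel

end InducesBijectionOn

variable [Module.Injective R E]

theorem bijective_of_forall_exists_notMem {h : (I →ₗ[R] E) →ₗ[R] (I →ₗ[R] E)}
    (hstep : ∀ L : Submodule R I, L ≠ ⊤ → ∃ v ∉ L, ∀ f, L ≤ LinearMap.ker f → h f v = f v) :
    Function.Bijective h := by
  obtain ⟨L, hL⟩ := zorn_le₀ {L | InducesBijectionOn h L} fun C hCh hC =>
    ⟨sSup C, .sSup_of_directedOn hC.directedOn hCh, fun _ => le_sSup⟩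
  suffices L = ⊤ from (this ▸ hL.prop : InducesBijectionOn h ⊤).bijective
  by_contra hne
  obtain ⟨v, hvL, hv⟩ := hstep L hne
  refine hvL (hL.le_of_ge hL.prop.iInf_ker_sub hL.prop.le_iInf_ker_sub ?_)
  simpa only [Submodule.mem_iInf, LinearMap.mem_ker, LinearMap.sub_apply, sub_eq_zero] using hv

theorem exists_notMem_of_isEssential [IsNoetherianRing R] {A : Submodule R I} (hA : IsEssential A)
    {d : (I →ₗ[R] E) →ₗ[R] (I →ₗ[R] E)} (hd : ∀ f, A ≤ LinearMap.ker (d f))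
    {L : Submodule R I} (hL : L ≠ ⊤) : ∃ v ∉ L, ∀ f, L ≤ LinearMap.ker f → d f v = 0 := by
  let C : I → Ideal R := fun v => A.comap (LinearMap.toSpanSingleton R I v)
  -- If `v ∉ L` has a maximal conductor `C v`, then any `w` killed by `C v` with `f w ≠ 0` is
  -- outside `L`, so `C w = C v`, contradicting essentiality. Hence `f ∈ C v • Hom(I, E)`.
  obtain ⟨v, hv, hmax⟩ := exists_maximalFor_of_wellFoundedGT (· ∉ L) C
    (SetLike.exists_not_mem_of_ne_top L hL rfl)
  refine ⟨v, hv, fun f hf => ?_⟩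
  have hfC : f ∈ C v • (⊤ : Submodule R (I →ₗ[R] E)) := by
    refine mem_smul_top_of_forall_smul_eq_zero (IsNoetherian.noetherian _) fun w hw => ?_
    by_contra hfw
    have hle : C v ≤ C w := fun c hc => by simp [C, hw c hc]
    obtain ⟨c, hcA, hc⟩ := hA.exists_smul_mem (v := w) fun hw₀ => hfw (by rw [hw₀, map_zero])
    exact hc (hw c (hmax (fun hwL => hfw (hf hwL)) hle hcA))
  refine Submodule.smul_induction_on hfC (fun c hc g _ => ?_) fun f g hf hg => ?_
  · rw [map_smul, LinearMap.smul_apply, ← map_smul]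
    exact hd g hc
  · rw [map_add, LinearMap.add_apply, hf, hg, add_zero]

theorem isFlatCover_lcomp [IsNoetherianRing R] {M I : Type u} [AddCommGroup M] [Module R M]
    [AddCommGroup I] [Module R I] {i : M →ₗ[R] I} (hi : IsInjectiveEnvelope R i) :
    IsFlatCover R (LinearMap.lcomp R E i) := by
  have := hi.1
  refine ⟨isFlatPrecover_lcomp hi.2.1, fun h hh => bijective_of_forall_exists_notMem fun L hL => ?_⟩
  have hd (f : I →ₗ[R] E) : LinearMap.range i ≤
      LinearMap.ker ((h - LinearMap.id : (I →ₗ[R] E) →ₗ[R] (I →ₗ[R] E)) f) := by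
    rintro _ ⟨m, rfl⟩
    simpa [sub_eq_zero] using LinearMap.congr_fun (LinearMap.congr_fun hh f) m
  simpa [sub_eq_zero] using exists_notMem_of_isEssential hi.2.2 hd hL

end FlatCover

section Reflexive

variable {E M N : Type u} [AddCommGroup E] [Module R E] [AddCommGroup M] [Module R M]
  [AddCommGroup N] [Module R N]

namespace IsInjectiveCogenerator

theorem exists_apply_ne_zero (hE : IsInjectiveCogenerator R E) {x : M} (hx : x ≠ 0) :
    ∃ g : M →ₗ[R] E, g x ≠ 0 := by
  have := hE.1
  obtain ⟨g, hg⟩ := hE.2 (Submodule.span R {x}) ⟨⟨x, Submodule.mem_span_singleton_self x⟩, by simpa⟩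
  obtain ⟨k, rfl⟩ := Module.Injective.extension_property R E _ _ (Submodule.span R {x}).subtype
    (Submodule.subtype_injective _) g
  refine ⟨k, fun hkx => hg (LinearMap.ext fun ⟨y, hy⟩ => ?_)⟩
  obtain ⟨c, rfl⟩ := Submodule.mem_span_singleton.1 hy
  simp [hkx]

theorem mem_of_forall_le_ker (hE : IsInjectiveCogenerator R E) {L : Submodule R M} {x : M}
    (h : ∀ g : M →ₗ[R] E, L ≤ LinearMap.ker g → g x = 0) : x ∈ L := by
  by_contra hx
  obtain ⟨g, hg⟩ := hE.exists_apply_ne_zero ((Submodule.Quotient.mk_eq_zero L).not.2 hx)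
  exact hg (h (g ∘ₗ L.mkQ) fun y hy => by simp [(Submodule.Quotient.mk_eq_zero L).2 hy])

theorem applyₗ_injective (hE : IsInjectiveCogenerator R E) :
    Function.Injective (LinearMap.applyₗ : M →ₗ[R] (M →ₗ[R] E) →ₗ[R] E) := by
  refine (injective_iff_map_eq_zero _).2 fun m hm => ?_
  by_contra hne
  obtain ⟨g, hg⟩ := hE.exists_apply_ne_zero hne
  exact hg (LinearMap.congr_fun hm g)

theorem isMatlisReflexive_iff (hE : IsInjectiveCogenerator R E) :
    IsMatlisReflexive R E M ↔ ∀ φ : (M →ₗ[R] E) →ₗ[R] E, ∃ m : M, ∀ f, f m = φ f :=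
  (and_iff_right hE.applyₗ_injective).trans
    (forall_congr' fun _ => exists_congr fun _ => LinearMap.ext_iff)

end IsInjectiveCogenerator

namespace IsMatlisReflexive

theorem of_surjective (hE : IsInjectiveCogenerator R E) (hM : IsMatlisReflexive R E M)
    {g : M →ₗ[R] N} (hg : Function.Surjective g) : IsMatlisReflexive R E N := by
  have := hE.1
  refine hE.isMatlisReflexive_iff.2 fun φ => ?_
  obtain ⟨ψ, rfl⟩ := exists_comp_eq_of_ker_le (g := LinearMap.lcomp R E g) (f := φ) <|
    (LinearMap.ker_eq_bot.2 (LinearMap.lcomp_injective_of_surjective g hg)).trans_le bot_le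
  obtain ⟨m, hm⟩ := hE.isMatlisReflexive_iff.1 hM ψ
  exact ⟨g m, fun f => hm (f ∘ₗ g)⟩

theorem exists_forall_apply_eq_of_le_ker (hE : IsInjectiveCogenerator R E) {L : Submodule R M}
    (hQ : IsMatlisReflexive R E (M ⧸ L)) (φ : (M →ₗ[R] E) →ₗ[R] E) :
    ∃ m : M, ∀ f, L ≤ LinearMap.ker f → f m = φ f := by
  obtain ⟨q, hq⟩ := hE.isMatlisReflexive_iff.1 hQ (φ ∘ₗ LinearMap.lcomp R E L.mkQ)
  obtain ⟨m, rfl⟩ := L.mkQ_surjective q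
  refine ⟨m, fun f hf => ?_⟩
  simpa [LinearMap.lcomp_apply', L.liftQ_mkQ] using hq (L.liftQ f hf)

theorem of_submodule_of_quotient (hE : IsInjectiveCogenerator R E) {L : Submodule R M}
    (hL : IsMatlisReflexive R E L) (hQ : IsMatlisReflexive R E (M ⧸ L)) :
    IsMatlisReflexive R E M := by
  have := hE.1
  refine hE.isMatlisReflexive_iff.2 fun φ => ?_
  obtain ⟨m, hm⟩ := hQ.exists_forall_apply_eq_of_le_ker hE φ
  obtain ⟨ψ, hψ⟩ := exists_comp_eq_of_ker_le (g := LinearMap.lcomp R E L.subtype)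
    (f := φ - LinearMap.applyₗ m) fun f hf =>
      LinearMap.mem_ker.2 (sub_eq_zero.2 (hm f fun y hy => LinearMap.congr_fun hf ⟨y, hy⟩).symm)
  obtain ⟨l, hl⟩ := hE.isMatlisReflexive_iff.1 hL ψ
  refine ⟨m + l, fun f => ?_⟩
  have hlf : f l = φ f - f m := (hl (f ∘ₗ L.subtype)).trans (LinearMap.congr_fun hψ f)
  rw [map_add, hlf, add_sub_cancel]

theorem of_dual (hE : IsInjectiveCogenerator R E) (hM : IsMatlisReflexive R E (M →ₗ[R] E)) :
    IsMatlisReflexive R E M := by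
  refine ⟨hE.applyₗ_injective, fun φ => LinearMap.mem_range.1 ?_⟩
  refine hE.mem_of_forall_le_ker fun Ψ hΨ => ?_
  obtain ⟨f, rfl⟩ := hM.2 Ψ
  have hf : f = 0 := LinearMap.ext fun m => hΨ ⟨m, rfl⟩
  simp [hf]

theorem exists_forall_sub_mem (hE : IsInjectiveCogenerator R E) (hM : IsMatlisReflexive R E M)
    {ι : Type*} [Preorder ι] [IsDirectedOrder ι] {L : ι → Submodule R M} (hL : Antitone L)
    {c : ι → M} (hc : ∀ i j, i ≤ j → c j - c i ∈ L i) : ∃ x, ∀ i, x - c i ∈ L i := by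
  have := hE.1
  let A : ι → Submodule R (M →ₗ[R] E) := fun i => LinearMap.ker (LinearMap.lcomp R E (L i).subtype)
  have hA {i : ι} {f : M →ₗ[R] E} : f ∈ A i ↔ L i ≤ LinearMap.ker f :=
    ⟨fun hf y hy => LinearMap.congr_fun hf ⟨y, hy⟩, fun hf => LinearMap.ext fun y => hf y.2⟩
  obtain ⟨φ, hφ⟩ := exists_le_ker_sub_of_monotone (L := A) (G := fun i => LinearMap.applyₗ (c i))
    (fun i j hij f hf => hA.2 ((hL hij).trans (hA.1 hf))) fun i j hij f hf => by
      have hfc : f (c j) = f (c i) := by simpa [sub_eq_zero] using hA.1 hf (hc i j hij)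
      simp [hfc]
  obtain ⟨x, hx⟩ := hE.isMatlisReflexive_iff.1 hM φ
  refine ⟨x, fun i => hE.mem_of_forall_le_ker fun g hg => ?_⟩
  simpa [hx, sub_eq_zero] using hφ i (hA.2 hg)

theorem isPrecomplete (hE : IsInjectiveCogenerator R E) (hM : IsMatlisReflexive R E M)
    (J : Ideal R) : IsPrecomplete J M := by
  refine ⟨fun f hf => ?_⟩
  obtain ⟨x, hx⟩ := hM.exists_forall_sub_mem hE
    (fun m n hmn => Submodule.smul_mono_left (Ideal.pow_le_pow_right hmn))
    (fun m n hmn => SModEq.sub_mem.1 (hf hmn).symm)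
  exact ⟨x, fun n => (SModEq.sub_mem.2 (hx n)).symm⟩

theorem of_isPrecomplete (hE : IsInjectiveCogenerator R E) {J : Ideal R} (hM : IsPrecomplete J M)
    (hQ : ∀ n, IsMatlisReflexive R E (M ⧸ (J ^ n • ⊤ : Submodule R M)))
    (hJ : ∀ f : M →ₗ[R] E, ∃ n, J ^ n • ⊤ ≤ LinearMap.ker f) : IsMatlisReflexive R E M := by
  refine hE.isMatlisReflexive_iff.2 fun φ => ?_
  choose c hc using fun n => (hQ n).exists_forall_apply_eq_of_le_ker hE φ
  obtain ⟨x, hx⟩ := hM.prec' c fun {m n} hmn => SModEq.sub_mem.2 <|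
    hE.mem_of_forall_le_ker fun g hg => by
      have hle : (J ^ n • ⊤ : Submodule R M) ≤ J ^ m • ⊤ :=
        Submodule.smul_mono_left (Ideal.pow_le_pow_right hmn)
      rw [map_sub, hc m g hg, hc n g (hle.trans hg), sub_self]
  refine ⟨x, fun f => ?_⟩
  obtain ⟨n, hn⟩ := hJ f
  rw [← hc n f hn, eq_comm, ← sub_eq_zero, ← map_sub]
  exact hn (SModEq.sub_mem.1 (hx n))

theorem of_isEssential_range_lcomp_lcomp (hE : IsInjectiveCogenerator R E)
    (hM : IsMatlisReflexive R E M) [Module.Injective R N] {i : M →ₗ[R] N}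
    (h : IsEssential (LinearMap.range (LinearMap.lcomp R E (LinearMap.lcomp R E i)))) :
    IsMatlisReflexive R E N := by
  have hle : LinearMap.range (LinearMap.lcomp R E (LinearMap.lcomp R E i)) ≤
      LinearMap.range (LinearMap.applyₗ : N →ₗ[R] (N →ₗ[R] E) →ₗ[R] E) := by
    rintro _ ⟨φ, rfl⟩
    obtain ⟨m, rfl⟩ := hM.2 φ
    exact ⟨i m, rfl⟩
  exact ⟨hE.applyₗ_injective, (h.mono hle).surjective_of_injective hE.applyₗ_injective⟩

end IsMatlisReflexive

end Reflexive

theorem IsEssential.exists_pow_smul_eq_zero [IsNoetherianRing R] {I : Type*} [AddCommGroup I]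
    [Module R I] {A : Submodule R I} (hA : IsEssential A) {J : Ideal R}
    (hJ : ∀ r ∈ J, ∀ a ∈ A, r • a = 0) (v : I) :
    ∃ n, ∀ r ∈ J ^ n, r • v = 0 := by
  let N := Submodule.span R {v}
  obtain ⟨k, hk⟩ := J.exists_pow_inf_eq_pow_smul (A.comap N.subtype)
  have hbot : (J ^ (k + 1) • ⊤ ⊓ A.comap N.subtype : Submodule R N) = ⊥ := by
    rw [hk (k + 1) k.le_succ, add_tsub_cancel_left, pow_one, eq_bot_iff]
    exact Submodule.smul_le.2 fun r hr x hx => Subtype.ext (hJ r hr x hx.2)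
  refine ⟨k + 1, fun r hr => ?_⟩
  by_contra hne
  obtain ⟨c, hcA, hc⟩ := hA.exists_smul_mem hne
  let w : N := ⟨v, Submodule.mem_span_singleton_self v⟩
  have hw : c • r • w ∈ (J ^ (k + 1) • ⊤ ⊓ A.comap N.subtype : Submodule R N) :=
    ⟨Submodule.smul_mem _ c (Submodule.smul_mem_smul hr Submodule.mem_top), hcA⟩
  exact hc (congr_arg Subtype.val ((Submodule.eq_bot_iff _).1 hbot _ hw))

section LocalRing

open IsLocalRing

variable [IsLocalRing R] {E : Type u} [AddCommGroup E] [Module R E]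
  {j : (R ⧸ maximalIdeal R) →ₗ[R] E}

theorem isInjectiveCogenerator_of_injective [Module.Injective R E] (hj : Function.Injective j) :
    IsInjectiveCogenerator R E := by
  refine ⟨inferInstance, fun N _ _ ⟨x, hx⟩ => ?_⟩
  obtain ⟨k, hk⟩ := exists_comp_eq_of_ker_le (g := LinearMap.toSpanSingleton R N x)
    (f := j ∘ₗ (maximalIdeal R).mkQ) <| by
      refine (le_maximalIdeal fun htop => hx ?_).trans fun r hr => ?_
      · rw [← LinearMap.toSpanSingleton_apply_one R N x, LinearMap.ker_eq_top.1 htop,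
          LinearMap.zero_apply]
      · simp [Ideal.Quotient.eq_zero_iff_mem.2 hr]
  refine ⟨k, ?_⟩
  rintro rfl
  have h₁ : j (Ideal.Quotient.mk _ 1) = j 0 := by simpa using (LinearMap.congr_fun hk 1).symm
  exact one_ne_zero (hj h₁)

theorem IsEssential.mem_of_maximalIdeal_smul_eq_zero {A : Submodule R E} (hA : IsEssential A)
    {v : E} (hv : ∀ r ∈ maximalIdeal R, r • v = 0) : v ∈ A := by
  obtain rfl | hne := eq_or_ne v 0
  · exact A.zero_mem
  obtain ⟨c, hcA, hc⟩ := hA.exists_smul_mem hne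
  have hu : IsUnit c := by
    by_contra hcu
    exact hc (hv c hcu)
  exact (A.smul_mem_iff_of_isUnit hu).1 hcA

namespace IsInjectiveEnvelope

theorem isInjectiveCogenerator (hj : IsInjectiveEnvelope R j) : IsInjectiveCogenerator R E :=
  have := hj.1
  isInjectiveCogenerator_of_injective hj.2.1

theorem isMatlisReflexive_residueField (hj : IsInjectiveEnvelope R j) :
    IsMatlisReflexive R E (R ⧸ maximalIdeal R) := by
  have htors (r : R) (hr : r ∈ maximalIdeal R) (a : R ⧸ maximalIdeal R) : r • a = 0 :=
    Module.mem_annihilator.1 (Ideal.annihilator_quotient.ge hr) a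
  have hspan (f : (R ⧸ maximalIdeal R) →ₗ[R] E) : ∃ b : R, b • j = f := by
    obtain ⟨a, ha⟩ := IsEssential.mem_of_maximalIdeal_smul_eq_zero hj.2.2 (v := f 1) fun r hr => by
      rw [← map_smul, htors r hr, map_zero]
    obtain ⟨b, rfl⟩ := Ideal.Quotient.mk_surjective a
    refine ⟨b, Submodule.linearMap_qext _ (LinearMap.ext_ring ?_)⟩
    calc b • j 1 = j (b • 1) := (map_smul j b 1).symm
      _ = f 1 := by rw [← ha, Algebra.smul_def, mul_one]; rfl
  refine hj.isInjectiveCogenerator.isMatlisReflexive_iff.2 fun φ => ?_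
  obtain ⟨a, ha⟩ := IsEssential.mem_of_maximalIdeal_smul_eq_zero hj.2.2 (v := φ j) fun r hr => by
    rw [← map_smul]
    have hrj : r • j = 0 := LinearMap.ext fun a => by
      rw [LinearMap.smul_apply, ← map_smul, htors r hr, map_zero, LinearMap.zero_apply]
    rw [hrj, map_zero]
  refine ⟨a, fun f => ?_⟩
  obtain ⟨b, rfl⟩ := hspan f
  rw [map_smul, LinearMap.smul_apply, ha]

theorem isMatlisReflexive_of_isFiniteLength (hj : IsInjectiveEnvelope R j) {M : Type u}
    [AddCommGroup M] [Module R M] (hM : IsFiniteLength R M) : IsMatlisReflexive R E M := by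
  have hE := hj.isInjectiveCogenerator
  induction hM with
  | of_subsingleton =>
    refine hE.isMatlisReflexive_iff.2 fun φ => ⟨0, fun f => ?_⟩
    rw [Subsingleton.elim f 0, map_zero, map_zero]
  | @of_simple_quotient M _ _ N hs _ ih =>
    refine ih.of_submodule_of_quotient hE ?_
    obtain ⟨I, hI, ⟨e⟩⟩ := isSimpleModule_iff_quot_maximal.1 hs
    obtain rfl := eq_maximalIdeal hI
    exact hj.isMatlisReflexive_residueField.of_surjective hE e.symm.surjective

variable [IsNoetherianRing R]

theorem isMatlisReflexive_quotient_pow (hj : IsInjectiveEnvelope R j) (n : ℕ) :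
    IsMatlisReflexive R E (R ⧸ maximalIdeal R ^ n) := by
  apply hj.isMatlisReflexive_of_isFiniteLength
  obtain rfl | hn := eq_or_ne n 0
  · rw [pow_zero, Ideal.one_eq_top]
    exact .of_subsingleton
  have := quotient_artinian_of_mem_minimalPrimes_of_isLocalRing (maximalIdeal R ^ n)
    ⟨⟨inferInstance, Ideal.pow_le_self hn⟩, fun P hP _ => hP.1.le_of_pow_le hP.2⟩
  exact isFiniteLength_iff_isNoetherian_isArtinian.2
    ⟨inferInstance, isArtinian_of_surjective_algebraMap
      (R := R ⧸ maximalIdeal R ^ n) Ideal.Quotient.mk_surjective⟩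

theorem isMatlisReflexive_self [IsAdicComplete (maximalIdeal R) R]
    (hj : IsInjectiveEnvelope R j) : IsMatlisReflexive R E R := by
  refine .of_isPrecomplete hj.isInjectiveCogenerator (J := maximalIdeal R) inferInstance
    (fun n => ?_) fun f => ?_
  · rw [smul_eq_mul, Ideal.mul_top]
    exact hj.isMatlisReflexive_quotient_pow n
  · obtain ⟨n, hn⟩ := IsEssential.exists_pow_smul_eq_zero hj.2.2 (J := maximalIdeal R) (by
      rintro r hr _ ⟨a, rfl⟩
      rw [← map_smul, Module.mem_annihilator.1 (Ideal.annihilator_quotient.ge hr) a, map_zero])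
      (f 1)
    refine ⟨n, ?_⟩
    rw [smul_eq_mul, Ideal.mul_top]
    intro r hr
    rw [LinearMap.mem_ker, ← mul_one r, ← smul_eq_mul, map_smul, hn r hr]

theorem isAdicComplete_of_isMatlisReflexive (hj : IsInjectiveEnvelope R j)
    (hE : IsMatlisReflexive R E E) : IsAdicComplete (maximalIdeal R) R := by
  have hcog := hj.isInjectiveCogenerator
  have hdual : IsMatlisReflexive R E (R →ₗ[R] E) :=
    hE.of_surjective hcog (LinearMap.ringLmapEquivSelf R R E).symm.surjective
  have := (hdual.of_dual hcog).isPrecomplete hcog (maximalIdeal R)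
  exact ⟨⟩

end IsInjectiveEnvelope

end LocalRing

section InjectiveEnvelope

theorem exists_maximal_disjoint_ge {α : Type*} [CompleteLattice α] [IsCompactlyGenerated α]
    {a b : α} (h : Disjoint a b) : ∃ c, b ≤ c ∧ Maximal (Disjoint a) c :=
  zorn_le_nonempty₀ {c | Disjoint a c}
    (fun s hs hchain _ _ => ⟨sSup s, hchain.directedOn.disjoint_sSup_right.2 fun _ hc => hs hc,
      fun _ => le_sSup⟩) b h

theorem isEssential_submoduleOf {I : Type*} [AddCommGroup I] [Module R I] {A C L : Submodule R I}
    (hC : Maximal (Disjoint A) C) (hAL : A ≤ L) (hCL : Disjoint C L) :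
    IsEssential (A.submoduleOf L) := by
  refine fun N hN hNA => hN ?_
  have hNL : N.map L.subtype ≤ L := Submodule.map_subtype_le L N
  have hAN : Disjoint A (N.map L.subtype) := by
    refine Submodule.disjoint_def.2 ?_
    rintro _ hyA ⟨y, hyN, rfl⟩
    exact congr_arg Subtype.val ((Submodule.eq_bot_iff _).1 hNA y ⟨hyN, hyA⟩)
  have hle : N.map L.subtype ≤ C := le_sup_left.trans <| hC.le_of_ge
    (hAN.disjoint_sup_right_of_disjoint_sup_left (hCL.symm.mono_left (sup_le hAL hNL)))
    le_sup_right
  exact Submodule.map_injective_of_injective L.subtype_injective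
    ((eq_bot_mono (le_inf hle hNL) hCL.eq_bot).trans (Submodule.map_bot _).symm)

theorem injective_of_leftInverse {J L : Type u} [AddCommGroup J] [Module R J] [AddCommGroup L]
    [Module R L] [Module.Injective R J] {s : L →ₗ[R] J} {r : J →ₗ[R] L}
    (h : Function.LeftInverse r s) : Module.Injective R L := by
  refine ⟨fun X Y _ _ _ _ f hf g => ?_⟩
  obtain ⟨k, hk⟩ := Module.Injective.out f hf (s ∘ₗ g)
  exact ⟨r ∘ₗ k, fun x => by rw [LinearMap.comp_apply, hk, LinearMap.comp_apply, h]⟩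

variable {J : Type u} [AddCommGroup J] [Module R J] [Module.Injective R J]

theorem injective_of_maximal_disjoint {A C L : Submodule R J} (hC : Maximal (Disjoint A) C)
    (hAL : A ≤ L) (hL : Maximal (Disjoint C) L) : Module.Injective R L := by
  obtain ⟨h, hh⟩ := exists_comp_eq_of_ker_le (g := C.mkQ ∘ₗ L.subtype) (f := L.subtype) fun x hx =>
    hL.prop.le_bot ⟨(Submodule.Quotient.mk_eq_zero C).1 hx, x.2⟩
  let H : J →ₗ[R] J := h ∘ₗ C.mkQ
  have hHL (x : J) (hx : x ∈ L) : H x = x := LinearMap.congr_fun hh ⟨x, hx⟩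
  have hHC (x : J) (hx : x ∈ C) : H x = 0 := by simp [H, (Submodule.Quotient.mk_eq_zero C).2 hx]
  have hcomap : C.comap H ≤ C := by
    refine hC.le_of_ge (Submodule.disjoint_def.2 fun x hxA hx => ?_) fun x hx => ?_
    · exact Submodule.disjoint_def.1 hC.prop x hxA (hHL x (hAL hxA) ▸ hx)
    · rw [Submodule.mem_comap, hHC x hx]
      exact C.zero_mem
  have hrange : LinearMap.range H ≤ L := by
    refine hL.le_of_ge (Submodule.disjoint_def.2 ?_) fun x hx => ⟨x, hHL x hx⟩
    rintro _ hx ⟨x, rfl⟩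
    exact hHC x (hcomap hx)
  exact injective_of_leftInverse (s := L.subtype)
    (r := H.codRestrict L fun x => hrange ⟨x, rfl⟩) fun x => Subtype.ext (hHL x x.2)

theorem exists_isInjectiveEnvelope_of_injective {M : Type u} [AddCommGroup M] [Module R M]
    {f : M →ₗ[R] J} (hf : Function.Injective f) :
    ∃ (L : Submodule R J) (i : M →ₗ[R] L), IsInjectiveEnvelope R i := by
  obtain ⟨C, -, hC⟩ := exists_maximal_disjoint_ge (disjoint_bot_right (a := LinearMap.range f))
  obtain ⟨L, hfL, hL⟩ := exists_maximal_disjoint_ge hC.prop.symm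
  refine ⟨L, f.codRestrict L fun m => hfL ⟨m, rfl⟩, injective_of_maximal_disjoint hC hfL hL,
    fun a b hab => hf (congr_arg Subtype.val hab), ?_⟩
  rw [LinearMap.range_codRestrict]
  exact isEssential_submoduleOf hC hfL hL.prop

variable (R) in
theorem exists_isInjectiveEnvelope (M : Type u) [AddCommGroup M] [Module R M] :
    ∃ (I : Type u) (_ : AddCommGroup I) (_ : Module R I) (i : M →ₗ[R] I),
      IsInjectiveEnvelope R i := by
  obtain ⟨⟨J, _, f, hf⟩⟩ := CategoryTheory.EnoughInjectives.presentation (ModuleCat.of R M)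
  have := Module.injective_module_of_injective_object R J
  obtain ⟨L, i, hi⟩ :=
    exists_isInjectiveEnvelope_of_injective ((ModuleCat.mono_iff_injective f).1 hf)
  exact ⟨L, inferInstance, inferInstance, i, hi⟩

end InjectiveEnvelope

section KrullDimension

open Ideal

theorem exists_isPrime_mem_not_le [IsDomain R] [IsNoetherianRing R] {P : Ideal R} [P.IsPrime]
    (hP : P ≠ ⊥) {y : R} (hy : ¬ IsUnit y) (hyP : y ∉ P) :
    ∃ q : Ideal R, q.IsPrime ∧ y ∈ q ∧ ¬ P ≤ q := by
  obtain ⟨q, hq⟩ := nonempty_minimalPrimes (span_singleton_eq_top.not.2 hy)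
  have := hq.isPrime
  have hyq : y ∈ q := (span_singleton_le_iff_mem q).1 hq.le
  refine ⟨q, inferInstance, hyq, fun hPq => ?_⟩
  have hPlt : P < q := lt_of_le_of_ne hPq fun h => hyP (h ▸ hyq)
  have h₁ : (⊥ : Ideal R).height + 1 ≤ P.height :=
    height_add_one_le_of_lt_of_isPrime (bot_lt_iff_ne_bot.2 hP)
  have h₂ : P.height + 1 ≤ 1 := (height_add_one_le_of_lt_of_isPrime hPlt).trans
    (height_le_one_of_isPrincipal_of_mem_minimalPrimes _ q hq)
  have h₃ : (1 : ℕ∞) + 1 ≤ 1 := le_trans (by gcongr; exact le_add_self.trans h₁) h₂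
  exact absurd h₃ (by decide)

theorem exists_lt_lt_of_two_le_ringKrullDim (h : 2 ≤ ringKrullDim R) :
    ∃ P₀ P₁ P₂ : PrimeSpectrum R, P₀ < P₁ ∧ P₁ < P₂ := by
  obtain ⟨l, hl⟩ := (Order.le_krullDim_iff (n := 2)).1 h
  exact ⟨l ⟨0, by omega⟩, l ⟨1, by omega⟩, l ⟨2, by omega⟩,
    l.strictMono (Fin.mk_lt_mk.2 zero_lt_one), l.strictMono (Fin.mk_lt_mk.2 one_lt_two)⟩

theorem exists_ringHom_of_isPrime_of_lt [IsDomain R] [IsNoetherianRing R] {P P' : Ideal R}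
    [hprime : P.IsPrime] (hP : P ≠ ⊥) (hlt : P < P') (hP' : P' ≠ ⊤) :
    ∃ (A : Type u) (_ : CommRing A) (_ : IsDomain A) (_ : IsNoetherianRing A) (φ : R →+* A)
      (x y : R), IsUnit (φ x) ∧ ¬ IsUnit (φ y) ∧ ∀ e d, φ (y ^ e + x * d) ≠ 0 := by
  obtain ⟨y, hyP', hyP⟩ := SetLike.exists_of_lt hlt
  obtain ⟨q, hq, hyq, hPq⟩ :=
    exists_isPrime_mem_not_le hP (fun hy => hP' (eq_top_of_isUnit_mem _ hyP' hy)) hyP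
  obtain ⟨x, hxP, hxq⟩ := SetLike.not_le_iff_exists.1 hPq
  let A := Localization.AtPrime q
  have hinj : Function.Injective (algebraMap R A) :=
    IsLocalization.injective A q.primeCompl_le_nonZeroDivisors
  refine ⟨A, inferInstance, inferInstance, inferInstance, algebraMap R A, x, y, ?_, ?_,
    fun e d hed => hyP ?_⟩
  · exact (IsLocalization.AtPrime.isUnit_to_map_iff A q x).2 hxq
  · exact (IsLocalization.AtPrime.isUnit_to_map_iff A q y).not.2 (not_not_intro hyq)
  · have hmem : y ^ e + x * d ∈ P := (map_eq_zero_iff _ hinj).1 hed ▸ P.zero_mem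
    exact hprime.mem_of_pow_mem e ((P.add_mem_iff_left (P.mul_mem_right d hxP)).1 hmem)

theorem exists_ringHom_of_two_le_ringKrullDim [IsNoetherianRing R] (h : 2 ≤ ringKrullDim R) :
    ∃ (A : Type u) (_ : CommRing A) (_ : IsDomain A) (_ : IsNoetherianRing A) (φ : R →+* A)
      (x y : R), IsUnit (φ x) ∧ ¬ IsUnit (φ y) ∧ ∀ e d, φ (y ^ e + x * d) ≠ 0 := by
  obtain ⟨P₀, P₁, P₂, h₀₁, h₁₂⟩ := exists_lt_lt_of_two_le_ringKrullDim h
  let π := Ideal.Quotient.mk P₀.asIdeal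
  have hπ : Function.Surjective π := Ideal.Quotient.mk_surjective
  have hcomap {P : PrimeSpectrum R} (hP : P₀ < P) : (P.asIdeal.map π).comap π = P.asIdeal :=
    comap_map_mk hP.le
  have := map_isPrime_of_surjective hπ (mk_ker.trans_le h₀₁.le : _ ≤ P₁.asIdeal)
  have hbot : P₁.asIdeal.map π ≠ ⊥ := fun hP =>
    h₀₁.not_ge (((map_eq_bot_iff_le_ker π).1 hP).trans_eq mk_ker)
  have hlt : P₁.asIdeal.map π < P₂.asIdeal.map π := (map_mono h₁₂.le).lt_of_ne fun heq =>
    h₁₂.ne (PrimeSpectrum.ext (by rw [← hcomap h₀₁, heq, hcomap (h₀₁.trans h₁₂)]))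
  have htop : P₂.asIdeal.map π ≠ ⊤ := fun hP =>
    P₂.2.ne_top (by rw [← hcomap (h₀₁.trans h₁₂), hP, comap_top])
  obtain ⟨A, _, _, _, φ, x, y, hx, hy, hxy⟩ := exists_ringHom_of_isPrime_of_lt hbot hlt htop
  obtain ⟨x, rfl⟩ := hπ x
  obtain ⟨y, rfl⟩ := hπ y
  exact ⟨A, inferInstance, inferInstance, inferInstance, φ.comp π, x, y, hx, hy,
    fun e d => by simpa using hxy e (π d)⟩

end KrullDimension

section NonReflexive

variable {E I : Type u} [AddCommGroup E] [Module R E] [AddCommGroup I] [Module R I]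

theorem not_isMatlisReflexive_of_forall_linearCombination_eq_zero (hE : IsInjectiveCogenerator R E)
    {J : Ideal R} (hJ : J ≠ ⊤) {z : ℕ → I}
    (hz : ∀ b : ℕ →₀ R, Finsupp.linearCombination R z b = 0 → ∀ n, b n ∈ J) :
    ¬ IsMatlisReflexive R E I := by
  intro hI
  let T := Finsupp.linearCombination R z
  let W : ℕ → Submodule R (ℕ →₀ R) := fun n => ⨅ j < n, Submodule.comap (Finsupp.lapply j) J
  have hW {n : ℕ} {a : ℕ →₀ R} : a ∈ W n ↔ ∀ j < n, a j ∈ J := by simp [W]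
  let d : ℕ → ℕ →₀ R := fun n => ∑ j ∈ Finset.range n, Finsupp.single j 1
  have hd (n j : ℕ) : d n j = if j < n then 1 else 0 := by
    simp [d, Finsupp.finsetSum_apply, Finsupp.single_apply]
  obtain ⟨v, hv⟩ := hI.exists_forall_sub_mem hE (L := fun n => (W n).map T) (c := fun n => T (d n))
    (fun m n hmn => Submodule.map_mono fun a ha => hW.2 fun j hj => hW.1 ha j (hj.trans_le hmn))
    fun m n hmn => by
      refine ⟨d n - d m, hW.2 fun j hj => ?_, map_sub T _ _⟩
      rw [Finsupp.sub_apply, hd, hd, if_pos (hj.trans_le hmn), if_pos hj, sub_self]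
      exact J.zero_mem
  obtain ⟨a, -, ha⟩ := hv 0
  obtain ⟨n, hn⟩ := a.support.exists_notMem
  obtain ⟨w, hw, hwv⟩ := hv (n + 1)
  have hker : T (d (n + 1) + w - a) = 0 := by
    rw [map_sub, map_add, ha, hwv]
    simp [d]
  have hmem := hz _ hker n
  rw [Finsupp.sub_apply, Finsupp.add_apply, Finsupp.notMem_support_iff.1 hn, sub_zero, hd,
    if_pos n.lt_succ_self] at hmem
  exact hJ (J.eq_top_iff_one.2 ((J.add_mem_iff_left (hW.1 hw n n.lt_succ_self)).1 hmem))

variable {A : Type*} [CommRing A] {φ : R →+* A} {x y : R}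

theorem exists_forall_not_pow_dvd [IsDomain A] [IsNoetherianRing A]
    (hE : IsInjectiveCogenerator R E) (hR : IsMatlisReflexive R E R) (hx : IsUnit (φ x))
    (hy : ¬ IsUnit (φ y)) {a : R} (ha : ∀ d, φ (a + x * d) ≠ 0) :
    ∃ f, ∀ c, ¬ φ y ^ f ∣ φ (a + x * c) := by
  by_contra! hcon
  choose c hc using hcon
  let L : ℕ → Ideal R := fun f => (Ideal.span {φ y ^ f}).comap φ
  have hL {f : ℕ} {r : R} : r ∈ L f ↔ φ y ^ f ∣ φ r := Ideal.mem_span_singleton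
  obtain ⟨d, hd⟩ := hR.exists_forall_sub_mem hE (L := L) (c := c)
    (fun m n hmn r hr => hL.2 ((pow_dvd_pow _ hmn).trans (hL.1 hr))) fun m n hmn => by
      rw [hL, ← hx.dvd_mul_left, ← map_mul]
      convert dvd_sub ((pow_dvd_pow _ hmn).trans (hc n)) (hc m) using 1
      rw [← map_sub]
      ring_nf
  refine ha d ?_
  rw [← Ideal.mem_bot, ← Ideal.iInf_pow_eq_bot_of_isDomain _ (Ideal.span_singleton_eq_top.not.2 hy),
    Ideal.mem_iInf]
  intro f
  rw [Ideal.span_singleton_pow, Ideal.mem_span_singleton]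
  convert dvd_add (hc f) ((hL.1 (hd f)).mul_left (φ x)) using 1
  rw [← map_mul, ← map_add]
  ring_nf

theorem map_sum_eq_zero_of_linearCombination_eq_zero {u : I} (hu : ∀ r : R, r • u = 0 → φ r = 0)
    {e : ℕ → ℕ} {z : ℕ → I} (hz : ∀ n, x ^ n • z n = y ^ e n • u) {b : ℕ →₀ R}
    (hb : Finsupp.linearCombination R z b = 0) {N : ℕ} (hN : b.support ⊆ Finset.range N) :
    φ (∑ j ∈ Finset.range N, b j * x ^ (N - j) * y ^ e j) = 0 := by
  refine hu _ ?_
  rw [Finsupp.linearCombination_apply, Finsupp.sum_of_support_subset _ hN _ (by simp)] at hb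
  rw [← smul_zero (x ^ N), ← hb, Finset.sum_smul, Finset.smul_sum]
  refine Finset.sum_congr rfl fun j hj => ?_
  rw [mul_smul, ← hz, smul_smul, smul_smul, mul_assoc, ← pow_add,
    Nat.sub_add_cancel (Finset.mem_range.1 hj).le, mul_comm]

theorem exists_pow_dvd_of_map_sum_eq_zero (hx : IsUnit (φ x)) {e : ℕ → ℕ} (he : Monotone e)
    {b : ℕ → R} {n N : ℕ} (hn : n < N)
    (hb : φ (∑ j ∈ Finset.range N, b j * x ^ (N - j) * y ^ e j) = 0) :
    ∃ c, φ y ^ e (n + 1) ∣ φ (b n * y ^ e n + x * c) := by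
  obtain ⟨c, hc⟩ : x ^ (N - n) * x ∣ ∑ j ∈ Finset.range n, b j * x ^ (N - j) * y ^ e j := by
    refine Finset.dvd_sum fun j hj => ((?_ : _ ∣ x ^ (N - j)).mul_left _).mul_right _
    rw [← pow_succ]
    exact pow_dvd_pow x (by have := Finset.mem_range.1 hj; omega)
  have htail : φ y ^ e (n + 1) ∣ φ (∑ j ∈ Finset.Ico (n + 1) N, b j * x ^ (N - j) * y ^ e j) := by
    rw [← map_pow]
    exact map_dvd φ (Finset.dvd_sum fun j hj =>
      (pow_dvd_pow y (he (Finset.mem_Ico.1 hj).1)).mul_left _)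
  rw [← Finset.sum_range_add_sum_Ico _ (Nat.succ_le_of_lt hn), map_add] at hb
  refine ⟨c, ((hx.pow (N - n)).dvd_mul_left).1 ?_⟩
  rw [← map_pow φ x, ← map_mul]
  convert (dvd_add_left htail).1 (hb ▸ dvd_zero _) using 2
  rw [Finset.sum_range_succ, hc]
  ring

theorem not_isUnit_of_linearCombination_eq_zero (hx : IsUnit (φ x)) {u : I}
    (hu : ∀ r : R, r • u = 0 → φ r = 0) {e : ℕ → ℕ} (he : Monotone e)
    (hnd : ∀ n c, ¬ φ y ^ e (n + 1) ∣ φ (y ^ e n + x * c)) {z : ℕ → I}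
    (hz : ∀ n, x ^ n • z n = y ^ e n • u) {b : ℕ →₀ R}
    (hb : Finsupp.linearCombination R z b = 0) (n : ℕ) : ¬ IsUnit (b n) := by
  intro hbn
  obtain ⟨N, hN⟩ := b.support.exists_nat_subset_range
  have hN' : b.support ⊆ Finset.range (max N (n + 1)) :=
    hN.trans (Finset.range_subset_range.2 (le_max_left _ _))
  obtain ⟨c, hc⟩ := exists_pow_dvd_of_map_sum_eq_zero hx he (le_max_right N (n + 1))
    (map_sum_eq_zero_of_linearCombination_eq_zero hu hz hb hN')
  obtain ⟨w, hw⟩ := hbn.exists_left_inv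
  refine hnd n (w * c) ?_
  convert hc.mul_left (φ w) using 1
  rw [← map_mul]
  congr 1
  linear_combination (-(y ^ e n)) * hw

theorem not_isMatlisReflexive_of_quotient_ker [IsLocalRing R] [IsDomain A] [IsNoetherianRing A]
    [Module.Injective R I] (hE : IsInjectiveCogenerator R E) (hR : IsMatlisReflexive R E R)
    (hx : IsUnit (φ x)) (hy : ¬ IsUnit (φ y)) (hxy : ∀ e d, φ (y ^ e + x * d) ≠ 0)
    {i : (R ⧸ RingHom.ker φ) →ₗ[R] I} (hi : Function.Injective i) :
    ¬ IsMatlisReflexive R E I := by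
  choose F hF using fun e => exists_forall_not_pow_dvd hE hR hx hy (hxy e)
  let e : ℕ → ℕ := fun n => F^[n] 0
  have he_succ (n : ℕ) : e (n + 1) = F (e n) := Function.iterate_succ_apply' F n 0
  have he : Monotone e := monotone_nat_of_le_succ fun n => by
    by_contra! hlt
    refine hF (e n) 0 ?_
    rw [mul_zero, add_zero, map_pow, ← he_succ]
    exact pow_dvd_pow _ hlt.le
  let u : I := i (Ideal.Quotient.mk _ 1)
  have hu (r : R) : r • u = 0 ↔ φ r = 0 := by
    rw [← map_smul, map_eq_zero_iff i hi, ← RingHom.mem_ker, ← Ideal.Quotient.eq_zero_iff_mem,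
      Algebra.smul_def, map_one, mul_one]
    rfl
  have hdiv (n : ℕ) : ∃ w : I, x ^ n • w = y ^ e n • u := by
    refine exists_smul_eq_of_forall_mul_eq_zero fun r hr => ?_
    have hφr : φ r * φ x ^ n = 0 := by rw [← map_pow, ← map_mul, hr, map_zero]
    rw [smul_comm, (hu r).2 ((hx.pow n).mul_left_eq_zero.1 hφr), smul_zero]
  choose z hz using hdiv
  exact not_isMatlisReflexive_of_forall_linearCombination_eq_zero hE
    (IsLocalRing.maximalIdeal.isMaximal R).ne_top fun b hb n =>
      not_isUnit_of_linearCombination_eq_zero hx (fun r => (hu r).1) he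
        (fun m c => he_succ m ▸ hF (e m) c) hz hb n

end NonReflexive

end

/-- Let `(R, 𝔪)` be a Noetherian local ring that is not complete or
has Krull dimension at least `2`.  Then there exists an injective envelope `i : M → I`
with `M` Matlis reflexive and `I` not Matlis reflexive; and for every such `i` the
Matlis dual `i^∨` is a flat cover but `(i^∨)^∨` is not an injective envelope.  Here
`E(k)` is presented by an injective envelope `jk : R/𝔪 → Ek`. -/
theorem exists_injectiveEnvelope_reflexive_to_nonreflexive
    [IsLocalRing R] [IsNoetherianRing R]
    (Ek : Type u) [AddCommGroup Ek] [Module R Ek]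
    (jk : (R ⧸ IsLocalRing.maximalIdeal R) →ₗ[R] Ek) (hjk : IsInjectiveEnvelope R jk)
    (hR : ¬ IsAdicComplete (IsLocalRing.maximalIdeal R) R ∨ 2 ≤ ringKrullDim R) :
    (∃ (M I : Type u) (_ : AddCommGroup M) (_ : AddCommGroup I) (_ : Module R M)
        (_ : Module R I) (i : M →ₗ[R] I),
        IsInjectiveEnvelope R i ∧ IsMatlisReflexive R Ek M ∧ ¬ IsMatlisReflexive R Ek I) ∧
      ∀ (M I : Type u) (_ : AddCommGroup M) (_ : AddCommGroup I) (_ : Module R M)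
          (_ : Module R I) (i : M →ₗ[R] I),
        IsInjectiveEnvelope R i → IsMatlisReflexive R Ek M → ¬ IsMatlisReflexive R Ek I →
          IsFlatCover R (LinearMap.lcomp R Ek i) ∧
            ¬ IsInjectiveEnvelope R (LinearMap.lcomp R Ek (LinearMap.lcomp R Ek i)) := by
  refine ⟨?_, fun M I _ _ _ _ i hi hM hI => ?_⟩
  · by_cases hc : IsAdicComplete (IsLocalRing.maximalIdeal R) R
    · obtain ⟨A, _, _, _, φ, x, y, hx, hy, hxy⟩ :=
        exists_ringHom_of_two_le_ringKrullDim (hR.resolve_left (not_not_intro hc))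
      obtain ⟨I, _, _, i, hi⟩ := exists_isInjectiveEnvelope R (R ⧸ RingHom.ker φ)
      have := hi.1
      have hE := hjk.isInjectiveCogenerator
      have hRrefl := hjk.isMatlisReflexive_self
      exact ⟨R ⧸ RingHom.ker φ, I, inferInstance, inferInstance, inferInstance, inferInstance, i,
        hi, hRrefl.of_surjective hE (Submodule.mkQ_surjective _),
        not_isMatlisReflexive_of_quotient_ker hE hRrefl hx hy hxy hi.2.1⟩
    · exact ⟨R ⧸ IsLocalRing.maximalIdeal R, Ek, inferInstance, inferInstance, inferInstance,
        inferInstance, jk, hjk, hjk.isMatlisReflexive_residueField,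
        fun h => hc (hjk.isAdicComplete_of_isMatlisReflexive h)⟩
  · have := hi.1
    have := hjk.1
    exact ⟨isFlatCover_lcomp hi, fun h =>
      hI (hM.of_isEssential_range_lcomp_lcomp hjk.isInjectiveCogenerator h.2.2)⟩
end

section
/- Let R be a commutative Noetherian ring admitting a maximal ideal m such that R_m is not complete (in its maximal-adic topology) or dim R_m ≥ 2. Then there exists a flat cover f : F → M of R-modules such that for every injective cogenerator E, the morphism Hom_R(f,E) is not an injective envelope. -/
/-!
A prime `p` lies strictly below some maximal ideal `𝔪` of the non-Artinian ring `R`; fix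
`x ∈ 𝔪 \ p`. Let `A` be the image of `R` in `R_x`, let `D` be the `𝔪`-adic completion of `A`, which
is nonzero because `ker (R → R_x) ≤ p ≤ 𝔪`, and let `B = R_x ⊗[A] D`. Then `B` is flat over `R`,
contains `D`, and `x` is invertible in it.

The quotient map `q : B → B / D` is a flat precover: a map `F → B / D` from a flat module lifts as
soon as maps into `D` extend from `ker π` to `G`, for `π : G → F` a surjection from a projective
module. By flatness `ker π ⧸ 𝔪 ker π` embeds into the vector space `G ⧸ 𝔪 G`, so such maps extend
modulo `𝔪`, and by completeness of `D` the extension is found by successive approximation. Over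
a Noetherian ring products of flat modules are flat, so every power `q ^ κ` is a flat precover as
well. It is a flat cover because an endomorphism of `B ^ κ` killed by `q ^ κ` takes values in the
`𝔪`-adically separated module `D ^ κ`, whereas `B ^ κ` is `x`-divisible.

The kernel of `q ^ κ` contains all standard vectors. Taking `κ = B ⧸ 𝔫` for a maximal ideal `𝔫` of
`B`, there is a linear map `ψ : B ^ κ → B ⧸ 𝔫` sending the standard vector at `t` to `t`. Hence
`ker (q ^ κ)` already maps onto `B ⧸ 𝔫`, and the maps `B ^ κ → E` factoring through `ψ` form a
nonzero submodule of `Hom(B ^ κ, E)` which misses the image of `Hom(q ^ κ, E)`.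
-/

universe u

variable (R : Type u) [CommRing R]

section FlatModules

variable {A : Type*} [CommRing A]

theorem exists_eq_sum_smul_of_sum_smul_eq_zero {B ι σ : Type*} [AddCommGroup B]
    [Module A B] [Module.Flat A B] [Fintype ι] [Fintype σ] {f : ι → A} {y : σ → ι → A}
    (hy : ∀ c : ι → A, ∑ i, f i * c i = 0 → c ∈ Submodule.span A (Set.range y))
    {x : ι → B} (hx : ∑ i, f i • x i = 0) :
    ∃ w : σ → B, ∀ i, x i = ∑ s, y s i • w s := by
  obtain ⟨k, a, z, hxz, ha⟩ := Module.Flat.isTrivialRelation_of_sum_smul_eq_zero hx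
  choose c hc using fun j =>
    (Submodule.mem_span_range_iff_exists_fun A).1 (hy (fun i => a i j) (ha j))
  refine ⟨fun s => ∑ j, c j s • z j, fun i => ?_⟩
  have hai (j) : a i j = ∑ s, c j s * y s i := by
    simpa using (congrFun (hc j) i).symm
  simp only [hxz, hai, Finset.sum_smul, Finset.smul_sum, smul_smul, mul_comm]
  exact Finset.sum_comm

theorem flat_pi [IsNoetherianRing A] {X : Type*} {B : X → Type*} [∀ t, AddCommGroup (B t)]
    [∀ t, Module A (B t)] [∀ t, Module.Flat A (B t)] : Module.Flat A (∀ t, B t) := by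
  refine Module.Flat.of_forall_isTrivialRelation fun {l f x} hx => ?_
  let relations : Submodule A (Fin l → A) := LinearMap.ker (Fintype.linearCombination A f)
  have mem_relations (c) : c ∈ relations ↔ ∑ i, f i * c i = 0 := by
    simp [relations, Fintype.linearCombination_apply, mul_comm]
  obtain ⟨k, y, hy⟩ :=
    Submodule.fg_iff_exists_fin_generating_family.1 (IsNoetherian.noetherian relations)
  have hxt (t : X) : ∑ i, f i • x i t = 0 := by simpa using congrFun hx t
  choose w hw using fun t => exists_eq_sum_smul_of_sum_smul_eq_zero (y := y)
    (fun c hc => hy ▸ (mem_relations c).2 hc) (hxt t)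
  refine ⟨k, fun i s => y s i, fun s t => w t s, fun i => ?_, fun s => ?_⟩
  · ext t
    simpa using hw t i
  · exact (mem_relations _).1 (hy ▸ Submodule.subset_span ⟨s, rfl⟩)

theorem exists_ker_sum_smul_eq {G F ι : Type*} [AddCommGroup G] [Module A G] [AddCommGroup F]
    [Module A F] [Module.Flat A F] [Fintype ι] {π : G →ₗ[A] F} (hπ : Function.Surjective π)
    {f : ι → A} {x : ι → G} (hx : π (∑ i, f i • x i) = 0) :
    ∃ z : ι → LinearMap.ker π, ∑ i, f i • x i = ∑ i, f i • (z i : G) := by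
  obtain ⟨k, a, y, hy, ha⟩ := Module.Flat.isTrivialRelation_of_sum_smul_eq_zero
    (f := f) (x := fun i => π (x i)) (by simpa using hx)
  choose y' hy' using fun j => hπ (y j)
  refine ⟨fun i => ⟨x i - ∑ j, a i j • y' j, by simp [hy, hy']⟩, ?_⟩
  have hay' : ∑ i, f i • ∑ j, a i j • y' j = 0 := by
    simp only [Finset.smul_sum, smul_smul]
    rw [Finset.sum_comm]
    simp [← Finset.sum_smul, ha]
  simp [smul_sub, hay']

theorem smul_top_ker_eq_comap_subtype {G F : Type*} [AddCommGroup G] [Module A G]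
    [AddCommGroup F] [Module A F] [Module.Flat A F] {π : G →ₗ[A] F}
    (hπ : Function.Surjective π) (J : Ideal A) :
    (J • ⊤ : Submodule A (LinearMap.ker π)) =
      (J • ⊤ : Submodule A G).comap (LinearMap.ker π).subtype := by
  refine le_antisymm (Submodule.smul_top_le_comap_smul_top J _) fun g hg => ?_
  rw [Submodule.mem_comap, Submodule.subtype_apply, ← Submodule.span_univ, ← Set.range_id,
    Submodule.mem_ideal_smul_span_iff_exists_sum] at hg
  obtain ⟨f, hfJ, hfg⟩ := hg
  replace hfg : ∑ i : f.support, f i • (i : G) = g := by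
    rw [← hfg, Finsupp.sum]
    exact Finset.sum_coe_sort f.support fun i => f i • i
  obtain ⟨z, hz⟩ := exists_ker_sum_smul_eq hπ (hfg ▸ g.2)
  have hgz : g = ∑ i : f.support, f i • z i := Subtype.ext (by simpa using hfg.symm.trans hz)
  rw [hgz]
  exact Submodule.sum_mem _ fun i _ => Submodule.smul_mem_smul (hfJ i) Submodule.mem_top

end FlatModules

section Completeness

variable {A : Type*} [CommRing A] {G F : Type*} [AddCommGroup G] [Module A G] [AddCommGroup F]
  [Module A F] [Module.Flat A F] [Module.Projective A G] {π : G →ₗ[A] F} {J : Ideal A}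

theorem exists_sub_mem_smul_top [IsSemisimpleRing (A ⧸ J)] {P : Type*} [AddCommGroup P]
    [Module A P] (hπ : Function.Surjective π) (u : LinearMap.ker π →ₗ[A] P) :
    ∃ v : G →ₗ[A] P, ∀ k, u k - v k ∈ (J • ⊤ : Submodule A P) := by
  let ι := Submodule.mapQ (J • ⊤) (J • ⊤) (LinearMap.ker π).subtype
    (smul_top_ker_eq_comap_subtype hπ J).le
  have hι : Function.Injective ι := by
    rw [← LinearMap.ker_eq_bot, Submodule.ker_mapQ, ← smul_top_ker_eq_comap_subtype hπ,
      Submodule.mkQ_map_self]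
  have : IsSemisimpleModule A (G ⧸ (J • ⊤ : Submodule A G)) :=
    (Module.isTorsionBySet_quotient_ideal_smul G J).isSemisimpleModule_iff.1 inferInstance
  obtain ⟨e, he⟩ := IsSemisimpleModule.extension_property ι hι
    (Submodule.mapQ _ _ u (Submodule.smul_top_le_comap_smul_top J u))
  obtain ⟨v, hv⟩ := Module.projective_lifting_property
    (J • ⊤ : Submodule A P).mkQ (e ∘ₗ Submodule.mkQ _) (Submodule.mkQ_surjective _)
  refine ⟨v, fun k => (Submodule.Quotient.eq _).1 ?_⟩
  calc Submodule.Quotient.mk (u k) = e (ι (Submodule.Quotient.mk k)) :=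
        (LinearMap.congr_fun he (Submodule.Quotient.mk k)).symm
    _ = Submodule.Quotient.mk (v k) := (LinearMap.congr_fun hv (k : G)).symm

theorem exists_sub_mem_pow_succ_smul_top [IsSemisimpleRing (A ⧸ J)] {D : Type*} [AddCommGroup D]
    [Module A D] (hπ : Function.Surjective π) (u : LinearMap.ker π →ₗ[A] D) {n : ℕ}
    {v : G →ₗ[A] D} (hv : ∀ k : LinearMap.ker π, u k - v k ∈ (J ^ n • ⊤ : Submodule A D)) :
    ∃ v' : G →ₗ[A] D,
      (∀ k : LinearMap.ker π, u k - v' k ∈ (J ^ (n + 1) • ⊤ : Submodule A D)) ∧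
        ∀ g, v' g - v g ∈ (J ^ n • ⊤ : Submodule A D) := by
  let δ : LinearMap.ker π →ₗ[A] (J ^ n • ⊤ : Submodule A D) :=
    (u - v ∘ₗ (LinearMap.ker π).subtype).codRestrict _ hv
  obtain ⟨w, hw⟩ := exists_sub_mem_smul_top (J := J) hπ δ
  refine ⟨v + Submodule.subtype _ ∘ₗ w, fun k => ?_, fun g => by simp⟩
  have hk := (Submodule.mem_smul_top_iff J _ _).1 (hw k)
  rw [← Submodule.mul_smul, ← pow_succ'] at hk
  have hδ : (δ k : D) = u k - v k := rfl
  simpa [hδ, sub_sub] using hk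

theorem exists_extension_ker_of_isAdicComplete [IsSemisimpleRing (A ⧸ J)] {D : Type*}
    [AddCommGroup D] [Module A D] [IsAdicComplete J D] (hπ : Function.Surjective π)
    (u : LinearMap.ker π →ₗ[A] D) : ∃ v : G →ₗ[A] D, ∀ k : LinearMap.ker π, v k = u k := by
  choose! next hnext using fun n v =>
    exists_sub_mem_pow_succ_smul_top (J := J) hπ u (n := n) (v := v)
  let v (n : ℕ) : G →ₗ[A] D := Nat.rec 0 next n
  have hv (n : ℕ) : ∀ k : LinearMap.ker π, u k - v n k ∈ (J ^ n • ⊤ : Submodule A D) := by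
    induction n with
    | zero => simp
    | succ n ih => exact (hnext n (v n) ih).1
  have compatible {n : ℕ} : Submodule.factorPow J D n.le_succ ∘ₗ Submodule.mkQ _ ∘ₗ v (n + 1) =
      Submodule.mkQ _ ∘ₗ v n :=
    LinearMap.ext fun g => (Submodule.Quotient.eq _).2 ((hnext n (v n) (hv n)).2 g)
  refine ⟨IsAdicComplete.StrictMono.lift J strictMono_id (fun n => Submodule.mkQ _ ∘ₗ v n)
    compatible, fun k => ?_⟩
  refine (IsHausdorff.eq_iff_smodEq (I := J)).2 fun n => ?_
  exact (IsAdicComplete.StrictMono.mk_lift J strictMono_id _ compatible (k : G)).trans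
    ((Submodule.Quotient.eq _).2 (hv n k)).symm

theorem exists_comp_eq_of_exact [IsSemisimpleRing (A ⧸ J)] {B C D : Type*} [AddCommGroup B]
    [Module A B] [AddCommGroup C] [Module A C] [AddCommGroup D] [Module A D]
    [IsAdicComplete J D] {j : D →ₗ[A] B} {q : B →ₗ[A] C} (hj : Function.Injective j)
    (hjq : Function.Exact j q) (hq : Function.Surjective q) (g : F →ₗ[A] C) :
    ∃ h : F →ₗ[A] B, q ∘ₗ h = g := by
  let π : (F →₀ A) →ₗ[A] F := Finsupp.linearCombination A id
  have hπ : Function.Surjective π := Finsupp.linearCombination_id_surjective A F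
  obtain ⟨t, ht⟩ := Module.projective_lifting_property q (g ∘ₗ π) hq
  have hqt (x) : q (t x) = g (π x) := LinearMap.congr_fun ht x
  let u : LinearMap.ker π →ₗ[A] D := (t ∘ₗ (LinearMap.ker π).subtype).codRestrictOfInjective j hj
    fun x => (hjq _).1 (by simp [hqt])
  obtain ⟨v, hv⟩ := exists_extension_ker_of_isAdicComplete (J := J) hπ u
  have hker : LinearMap.ker π ≤ LinearMap.ker (t - j ∘ₗ v) := fun x hx => by
    have hjv : j (v x) = t x := by
      rw [hv ⟨x, hx⟩]
      exact LinearMap.codRestrictOfInjective_comp_apply ..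
    simp [hjv]
  refine ⟨(LinearMap.ker π).liftQ _ hker ∘ₗ (π.quotKerEquivOfSurjective hπ).symm, ?_⟩
  refine LinearMap.ext fun y => ?_
  obtain ⟨x, rfl⟩ := hπ y
  have hqj (d) : q (j d) = 0 := hjq.apply_apply_eq_zero d
  simp [hqj, hqt]

theorem linearMap_eq_zero_of_isHausdorff {I : Ideal A} {B D : Type*} [AddCommGroup B] [Module A B]
    [AddCommGroup D] [Module A D] [IsHausdorff I D] {x : A} (hxI : x ∈ I)
    (hx : Function.Surjective fun b : B => x • b) (φ : B →ₗ[A] D) : φ = 0 := by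
  ext b
  refine IsHausdorff.haus' (I := I) _ fun n => SModEq.zero.2 ?_
  obtain ⟨c, rfl⟩ : ∃ c, x ^ n • c = b := by
    simpa [smul_iterate] using hx.iterate n b
  rw [map_smul]
  exact Submodule.smul_mem_smul (Ideal.pow_mem_pow hxI n) Submodule.mem_top

theorem linearMap_eq_zero_of_comp_eq_zero {I : Ideal A} {N B C D : Type*} [AddCommGroup N]
    [Module A N] [AddCommGroup B] [Module A B] [AddCommGroup C] [Module A C] [AddCommGroup D]
    [Module A D] [IsHausdorff I D] {j : D →ₗ[A] B} {q : B →ₗ[A] C} (hj : Function.Injective j)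
    (hjq : Function.Exact j q) {x : A} (hxI : x ∈ I)
    (hx : Function.Surjective fun y : N => x • y) {φ : N →ₗ[A] B} (hφ : q ∘ₗ φ = 0) : φ = 0 := by
  let ψ := φ.codRestrictOfInjective j hj fun y => (hjq _).1 (LinearMap.congr_fun hφ y)
  have hψ : j ∘ₗ ψ = φ := LinearMap.codRestrictOfInjective_comp ..
  rw [← hψ, linearMap_eq_zero_of_isHausdorff hxI hx ψ, LinearMap.comp_zero]

end Completeness

section Products

theorem exists_linearMap_apply_single {K ι V : Type*} [DivisionRing K] [DecidableEq ι]
    [AddCommGroup V] [Module K V] (v : ι → V) :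
    ∃ ψ : (ι → K) →ₗ[K] V, ∀ i, ψ (Pi.single i 1) = v i := by
  obtain ⟨ρ, hρ⟩ := LinearMap.exists_leftInverse_of_injective
    (Finsupp.lcoeFun : (ι →₀ K) →ₗ[K] ι → K) (LinearMap.ker_eq_bot.2 DFunLike.coe_injective)
  refine ⟨Finsupp.linearCombination K v ∘ₗ ρ, fun i => ?_⟩
  have hi : ρ (Pi.single i 1) = Finsupp.single i 1 := by
    rw [← Finsupp.single_eq_pi_single]
    exact LinearMap.congr_fun hρ (Finsupp.single i 1)
  simp [hi]

theorem exists_linearMap_quotient_apply_single (A : Type*) {B : Type*} [CommRing A] [CommRing B]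
    [Algebra A B] (𝔫 : Ideal B) [𝔫.IsMaximal] {ι : Type*} [DecidableEq ι] (v : ι → B ⧸ 𝔫) :
    ∃ ψ : (ι → B) →ₗ[A] B ⧸ 𝔫, ∀ i, ψ (Pi.single i 1) = v i := by
  let _ : Field (B ⧸ 𝔫) := Ideal.Quotient.field 𝔫
  obtain ⟨ψ, hψ⟩ := exists_linearMap_apply_single (K := B ⧸ 𝔫) v
  let π : (ι → B) →ₗ[A] ι → B ⧸ 𝔫 := (Ideal.Quotient.mkₐ A 𝔫).toLinearMap.compLeft ι
  refine ⟨ψ.restrictScalars A ∘ₗ π, fun i => ?_⟩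
  have hπ : π (Pi.single i 1) = Pi.single i 1 := by
    ext t
    exact (Pi.apply_single (fun _ => Ideal.Quotient.mk 𝔫) (fun _ => map_zero _) i 1 t).trans
      (by rw [map_one])
  simp [hπ, hψ]

end Products

section FlatCovers

variable {R}

theorem IsFlatPrecover.piMap [IsNoetherianRing R] {ι : Type u} {F M : ι → Type u}
    [∀ i, AddCommGroup (F i)] [∀ i, AddCommGroup (M i)] [∀ i, Module R (F i)]
    [∀ i, Module R (M i)] {f : ∀ i, F i →ₗ[R] M i} (hf : ∀ i, IsFlatPrecover R (f i)) :
    IsFlatPrecover R (LinearMap.piMap f) := by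
  have (i : ι) : Module.Flat R (F i) := (hf i).1
  refine ⟨flat_pi, fun F' _ _ hF' g => ?_⟩
  choose h hh using fun i => (hf i).2 F' hF' (LinearMap.proj i ∘ₗ g)
  refine ⟨LinearMap.pi h, LinearMap.ext fun y => funext fun i => ?_⟩
  exact LinearMap.congr_fun (hh i) y

variable {F M : Type u} [AddCommGroup F] [AddCommGroup M] [Module R F] [Module R M]

theorem IsFlatPrecover.isFlatCover {f : F →ₗ[R] M} (hf : IsFlatPrecover R f)
    (h0 : ∀ φ : F →ₗ[R] F, f ∘ₗ φ = 0 → φ = 0) : IsFlatCover R f := by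
  refine ⟨hf, fun h hfh => ?_⟩
  have hid : h = LinearMap.id := by
    rw [← sub_eq_zero]
    exact h0 _ (by rw [LinearMap.comp_sub, hfh, LinearMap.comp_id, sub_self])
  exact hid ▸ Function.bijective_id

theorem isFlatCover_piMap_of_exact [IsNoetherianRing R] (ι : Type u) {J : Ideal R}
    [IsSemisimpleRing (R ⧸ J)] {D : Type*} [AddCommGroup D] [Module R D] [IsAdicComplete J D]
    [Module.Flat R F] {j : D →ₗ[R] F} {q : F →ₗ[R] M} (hj : Function.Injective j)
    (hjq : Function.Exact j q) (hq : Function.Surjective q) {x : R} (hxJ : x ∈ J)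
    (hx : Function.Surjective fun b : F => x • b) :
    IsFlatCover R (LinearMap.piMap fun _ : ι => q) := by
  have hprecover : IsFlatPrecover R q :=
    ⟨inferInstance, fun F' _ _ _ g => exists_comp_eq_of_exact (J := J) hj hjq hq g⟩
  refine (IsFlatPrecover.piMap fun _ => hprecover).isFlatCover fun φ hφ => ?_
  refine LinearMap.ext fun y => funext fun i => ?_
  refine LinearMap.congr_fun (linearMap_eq_zero_of_comp_eq_zero (φ := LinearMap.proj i ∘ₗ φ)
    hj hjq hxJ (Function.Surjective.piMap fun _ : ι => hx) ?_) y
  ext y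
  exact congrFun (LinearMap.congr_fun hφ y) i

theorem not_isInjectiveEnvelope_lcomp_of_map_ker_eq_top {K E : Type u} [AddCommGroup K]
    [Module R K] [AddCommGroup E] [Module R E] {g : K →ₗ[R] E} (hg : g ≠ 0) {f : F →ₗ[R] M}
    {ψ : F →ₗ[R] K} (hψ : (LinearMap.ker f).map ψ = ⊤) :
    ¬ IsInjectiveEnvelope R (LinearMap.lcomp R E f) := by
  have hψ' (k : K) : ∃ z, f z = 0 ∧ ψ z = k := hψ.ge Submodule.mem_top
  rintro ⟨-, -, hess⟩
  refine hess (LinearMap.range (LinearMap.lcomp R E ψ)) (fun hbot => hg ?_) ?_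
  · have hgψ : g ∘ₗ ψ = 0 := LinearMap.congr_fun (LinearMap.range_eq_bot.1 hbot) g
    ext k
    obtain ⟨z, -, rfl⟩ := hψ' k
    exact LinearMap.congr_fun hgψ z
  · rw [← disjoint_iff, Submodule.disjoint_def]
    rintro _ ⟨a, rfl⟩ ⟨b, hb⟩
    have ha : a = 0 := by
      ext k
      obtain ⟨z, hz, rfl⟩ := hψ' k
      have : b (f z) = a (ψ z) := LinearMap.congr_fun hb z
      simpa [hz] using this.symm
    simp [ha]

end FlatCovers

section Existence

variable {R}

theorem nontrivial_adicCompletion {A : Type*} [CommRing A] {J : Ideal A} (hJ : J ≠ ⊤) :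
    Nontrivial (AdicCompletion J A) := by
  have : Nontrivial (A ⧸ J ^ 1) := by
    rwa [pow_one, Ideal.Quotient.nontrivial_iff]
  have := (AdicCompletion.evalₐ J 1).toRingHom.domain_nontrivial
  infer_instance

theorem ker_algebraMap_le_of_notMem {p : Ideal R} [p.IsPrime] {x : R} (hx : x ∉ p) (S : Type*)
    [CommRing S] [Algebra R S] [IsLocalization.Away x S] :
    RingHom.ker (algebraMap R S) ≤ p := fun r hr => by
  obtain ⟨⟨_, n, rfl⟩, hn⟩ := (IsLocalization.map_eq_zero_iff (Submonoid.powers x) S r).1 hr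
  have hxr : x ^ n * r ∈ p := hn ▸ p.zero_mem
  exact (Ideal.IsPrime.mem_or_mem ‹_› hxr).resolve_left fun hxn =>
    hx (Ideal.IsPrime.mem_of_pow_mem ‹_› n hxn)

theorem map_algebraMap_range_ne_top {I : Ideal R} (hI : I ≠ ⊤) {S : Type*} [CommRing S]
    [Algebra R S] (hker : RingHom.ker (algebraMap R S) ≤ I) :
    I.map (algebraMap R (Algebra.ofId R S).range) ≠ ⊤ := by
  have hsurj : Function.Surjective (algebraMap R (Algebra.ofId R S).range) :=
    (Algebra.ofId R S).rangeRestrict_surjective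
  have hker' : RingHom.ker (algebraMap R (Algebra.ofId R S).range) ≤ I :=
    fun r hr => hker (congrArg Subtype.val hr)
  rwa [Ne, Ideal.map_eq_top_iff_of_ker_le _ hker' (RingHom.isIntegral_of_surjective _ hsurj)]

open TensorProduct in
theorem exists_flat_algHom_injective {A D S : Type u} [CommRing A] [CommRing D] [CommRing S]
    [Algebra R A] [Algebra R D] [Algebra R S] [Algebra A D] [Algebra A S] [IsScalarTower R A D]
    [IsScalarTower R A S] [Module.Flat A D] [Module.Flat R S]
    (hAS : Function.Injective (algebraMap A S)) :
    ∃ (B : Type u) (_ : CommRing B) (_ : Algebra R B) (i : D →ₐ[R] B), Function.Injective i ∧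
      Module.Flat R B ∧ ∀ x, IsUnit (algebraMap R S x) → IsUnit (algebraMap R B x) := by
  refine ⟨S ⊗[A] D, inferInstance, inferInstance,
    (Algebra.TensorProduct.includeRight : D →ₐ[A] S ⊗[A] D).restrictScalars R,
    Algebra.TensorProduct.includeRight_injective hAS, Module.Flat.trans R S (S ⊗[A] D),
    fun x hx => ?_⟩
  rw [IsScalarTower.algebraMap_apply R S (S ⊗[A] D)]
  exact hx.map (algebraMap S (S ⊗[A] D))

theorem exists_isAdicComplete_algHom_flat_isUnit [IsNoetherianRing R] {I : Ideal R}
    (hI : I ≠ ⊤) {x : R} (hx : RingHom.ker (algebraMap R (Localization.Away x)) ≤ I) :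
    ∃ (D B : Type u) (_ : CommRing D) (_ : CommRing B) (_ : Algebra R D) (_ : Algebra R B)
      (i : D →ₐ[R] B), Function.Injective i ∧ IsAdicComplete I D ∧ Nontrivial B ∧
        Module.Flat R B ∧ IsUnit (algebraMap R B x) := by
  let S := Localization.Away x
  let A := (Algebra.ofId R S).range
  let J := I.map (algebraMap R A)
  have : IsNoetherianRing A := AlgHom.isNoetherianRing_range _
  have : Module.Flat A (AdicCompletion J A) := AdicCompletion.flat_of_isNoetherian J
  have : Module.Flat R S := IsLocalization.flat S (Submonoid.powers x)
  have hcomplete : IsAdicComplete J (AdicCompletion J A) :=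
    AdicCompletion.isAdicComplete (IsNoetherian.noetherian J)
  have : Nontrivial (AdicCompletion J A) := nontrivial_adicCompletion
    (map_algebraMap_range_ne_top hI hx)
  obtain ⟨B, _, _, i, hi, hflat, hunit⟩ := exists_flat_algHom_injective (R := R) (A := A)
    (D := AdicCompletion J A) (S := S) Subtype.val_injective
  exact ⟨AdicCompletion J A, B, inferInstance, inferInstance, inferInstance, inferInstance, i, hi,
    (IsAdicComplete.map_algebraMap_iff I _).1 hcomplete, hi.nontrivial, hflat,
    hunit x (IsLocalization.Away.algebraMap_isUnit x)⟩

theorem exists_isPrime_lt_isMaximal [IsNoetherianRing R] (hR : ¬ IsArtinianRing R) :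
    ∃ p 𝔪 : Ideal R, p.IsPrime ∧ 𝔪.IsMaximal ∧ p < 𝔪 := by
  rw [isArtinianRing_iff_krullDimLE_zero, Ring.krullDimLE_zero_iff] at hR
  push Not at hR
  obtain ⟨p, hp, hpmax⟩ := hR
  obtain ⟨𝔪, h𝔪, hle⟩ := p.exists_le_maximal hp.ne_top
  exact ⟨p, 𝔪, hp, h𝔪, hle.lt_of_ne fun h => hpmax (h ▸ h𝔪)⟩

theorem not_isArtinianRing_of_localization (𝔪 : Ideal R) [𝔪.IsPrime]
    (h𝔪 : ¬ IsAdicComplete (IsLocalRing.maximalIdeal (Localization.AtPrime 𝔪))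
            (Localization.AtPrime 𝔪) ∨
          2 ≤ ringKrullDim (Localization.AtPrime 𝔪)) :
    ¬ IsArtinianRing R := by
  intro hR
  rcases h𝔪 with hcomplete | hdim
  · exact hcomplete inferInstance
  · rw [ringKrullDimZero_iff_ringKrullDim_eq_zero.1 inferInstance] at hdim
    exact absurd hdim (by decide)

theorem exists_flatCover_dual_not_injectiveEnvelope_general [IsNoetherianRing R]
    (hR : ¬ IsArtinianRing R) :
    ∃ (F M : Type u) (_ : AddCommGroup F) (_ : AddCommGroup M) (_ : Module R F)
        (_ : Module R M) (f : F →ₗ[R] M),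
      IsFlatCover R f ∧
        ∀ (E : Type u) (_ : AddCommGroup E) (_ : Module R E),
          IsInjectiveCogenerator R E →
            ¬ IsInjectiveEnvelope R (LinearMap.lcomp R E f) := by
  classical
  obtain ⟨p, 𝔪, _, _, hlt⟩ := exists_isPrime_lt_isMaximal hR
  obtain ⟨x, hx𝔪, hxp⟩ := SetLike.exists_of_lt hlt
  obtain ⟨D, B, _, _, _, _, i, hi, _, _, _, hxB⟩ :=
    exists_isAdicComplete_algHom_flat_isUnit (Ideal.IsPrime.ne_top inferInstance)
      ((ker_algebraMap_le_of_notMem hxp (Localization.Away x)).trans hlt.le)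
  obtain ⟨𝔫, _⟩ := Ideal.exists_maximal B
  obtain ⟨ψ, hψ⟩ := exists_linearMap_quotient_apply_single R 𝔫 (id : B ⧸ 𝔫 → B ⧸ 𝔫)
  let q := (LinearMap.range i.toLinearMap).mkQ
  let f := LinearMap.piMap fun _ : B ⧸ 𝔫 => q
  have hexact : Function.Exact i.toLinearMap q := LinearMap.exact_map_mkQ_range _
  have hq1 : q 1 = 0 := (hexact 1).2 ⟨1, map_one i⟩
  have hf (t : B ⧸ 𝔫) : f (Pi.single t 1) = 0 := by
    ext s
    by_cases hst : s = t <;> simp [f, hst, hq1]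
  have hker : (LinearMap.ker f).map ψ = ⊤ := eq_top_iff.2 fun t _ => ⟨Pi.single t 1, hf t, hψ t⟩
  let _ : Field (R ⧸ 𝔪) := Ideal.Quotient.field 𝔪
  have hdiv : Function.Surjective fun b : B => x • b := by
    simpa only [Algebra.smul_def] using (IsUnit.isUnit_iff_mulLeft_bijective.1 hxB).surjective
  refine ⟨_, _, _, _, _, _, f,
    isFlatCover_piMap_of_exact _ hi hexact (Submodule.mkQ_surjective _) hx𝔪 hdiv,
    fun E _ _ hE => ?_⟩
  obtain ⟨g, hg⟩ := hE.2 (B ⧸ 𝔫) (exists_ne 0)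
  exact not_isInjectiveEnvelope_lcomp_of_map_ker_eq_top hg hker

end Existence

/-- Let `R` be a commutative Noetherian ring admitting a maximal
ideal `𝔪` such that `R_𝔪` is not complete or `dim R_𝔪 ≥ 2`.  Then there exists a flat
cover `f : F → M` of `R`-modules such that for every injective cogenerator `E`, the
morphism `Hom_R(f, E)` is not an injective envelope. -/
theorem exists_flatCover_dual_not_injectiveEnvelope [IsNoetherianRing R]
    (𝔪 : Ideal R) [𝔪.IsMaximal]
    (h𝔪 : ¬ IsAdicComplete (IsLocalRing.maximalIdeal (Localization.AtPrime 𝔪))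
            (Localization.AtPrime 𝔪) ∨
          2 ≤ ringKrullDim (Localization.AtPrime 𝔪)) :
    ∃ (F M : Type u) (_ : AddCommGroup F) (_ : AddCommGroup M) (_ : Module R F)
        (_ : Module R M) (f : F →ₗ[R] M),
      IsFlatCover R f ∧
        ∀ (E : Type u) (_ : AddCommGroup E) (_ : Module R E),
          IsInjectiveCogenerator R E →
            ¬ IsInjectiveEnvelope R (LinearMap.lcomp R E f) := by
  exact exists_flatCover_dual_not_injectiveEnvelope_general
    (not_isArtinianRing_of_localization 𝔪 h𝔪)
end

section
/- Let R be a commutative Noetherian ring and M an R-module admitting a resolution ⋯ → F_1 → F_0 → M → 0 in which every F_i is flat and Matlis reflexive. Then every module appearing in the minimal flat resolution of M is Matlis reflexive. -/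
universe u

variable (R : Type u) [CommRing R]

/-- `0 → M → I⁰ → I¹ → ⋯` is a minimal injective resolution if it is an injective
resolution in which each map from the image of a differential into the next term is an
injective envelope. -/
def IsMinimalInjectiveResolution (M : Type u) [AddCommGroup M] [Module R M]
    (I : ℕ → Type u) [∀ n, AddCommGroup (I n)] [∀ n, Module R (I n)]
    (ι : M →ₗ[R] I 0) (d : ∀ n, I n →ₗ[R] I (n + 1)) : Prop :=
  (∀ n, Module.Injective R (I n)) ∧ Function.Injective ι ∧
    LinearMap.range ι = LinearMap.ker (d 0) ∧
    (∀ n, LinearMap.range (d n) = LinearMap.ker (d (n + 1))) ∧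
    IsInjectiveEnvelope R (LinearMap.range ι).subtype ∧
    ∀ n, IsInjectiveEnvelope R (LinearMap.range (d n)).subtype

/-- `⋯ → F₁ → F₀ → M → 0` is a minimal flat resolution if it is a resolution such
that each induced map `Fᵢ → im dᵢ` is a flat cover. -/
def IsMinimalFlatResolution (M : Type u) [AddCommGroup M] [Module R M]
    (F : ℕ → Type u) [∀ n, AddCommGroup (F n)] [∀ n, Module R (F n)]
    (π : F 0 →ₗ[R] M) (d : ∀ n, F (n + 1) →ₗ[R] F n) : Prop :=
  Function.Surjective π ∧
    LinearMap.range (d 0) = LinearMap.ker π ∧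
    (∀ n, LinearMap.range (d (n + 1)) = LinearMap.ker (d n)) ∧
    IsFlatCover R π ∧
    ∀ n, IsFlatCover R (d n).rangeRestrict

open DirectSum

/-!
Let `D` be injective and write `X*` for `Hom(X, D)`. Since the functor `X**` is exact, every syzygy
`N` of a resolution by `D`-reflexive modules embeds in `N**`. For flat `P` and `F → N` onto, the
tensor-hom adjunction lifts every map `P → N**` along `F** → N**`; if `F` is flat and reflexive and
`N` embeds in `N**`, this makes `F → N` a flat precover. A flat cover is a retract of any flat
precover of the same module, and so is its kernel. By induction each term of the minimal flat
resolution is a retract of the corresponding term of the reflexive one.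
-/

section DirectSum

variable {A ι : Type*} [Ring A] {E : ι → Type*} [∀ i, AddCommGroup (E i)] [∀ i, Module A (E i)]

theorem exists_finset_forall_apply_eq_zero {P : Type*} [AddCommGroup P] [Module A P]
    [Module.Finite A P] (g : P →ₗ[A] ⨁ i, E i) :
    ∃ S : Finset ι, ∀ p, ∀ i ∉ S, g p i = 0 := by
  classical
  obtain ⟨T, hT⟩ := Module.Finite.fg_top (R := A) (M := P)
  refine ⟨T.biUnion fun t ↦ DFinsupp.support (g t), fun p i hi ↦ ?_⟩
  have hspan : Submodule.span A (T : Set P) ≤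
      LinearMap.ker (DirectSum.component A ι E i ∘ₗ g) := by
    refine Submodule.span_le.2 fun t ht ↦ ?_
    by_contra hne
    exact hi (Finset.mem_biUnion.2 ⟨t, ht, DFinsupp.mem_support_iff.2 hne⟩)
  exact hspan (hT ▸ Submodule.mem_top)

theorem injective_directSum [IsNoetherianRing A] (hE : ∀ i, Module.Baer A (E i)) :
    Module.Injective A (⨁ i, E i) := by
  classical
  refine Module.Baer.injective fun I g ↦ ?_
  obtain ⟨S, hS⟩ := exists_finset_forall_apply_eq_zero g
  choose k hk using fun i ↦ hE i I (DirectSum.component A ι E i ∘ₗ g)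
  let y : ⨁ i, E i := DFinsupp.mk S fun i ↦ k i 1
  refine ⟨LinearMap.toSpanSingleton A _ y, fun r hr ↦ DFinsupp.ext fun i ↦ ?_⟩
  change r • (DFinsupp.mk S fun i ↦ k i 1 : Π₀ i, E i) i = g ⟨r, hr⟩ i
  by_cases hi : i ∈ S
  · rw [DFinsupp.mk_apply, dif_pos hi, ← map_smul, smul_eq_mul, mul_one]
    exact hk i r hr
  · rw [DFinsupp.mk_apply, dif_neg hi, smul_zero, hS _ i hi]

end DirectSum

variable {R}

variable (R) in
/-- `N` is torsionless with respect to `D` if it embeds in its double dual `Hom(Hom(N, D), D)`, that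
is, if homomorphisms `N → D` separate the points of `N`. -/
def IsTorsionless (D N : Type*) [AddCommGroup D] [AddCommGroup N] [Module R D] [Module R N] :
    Prop :=
  Function.Injective (LinearMap.applyₗ : N →ₗ[R] ((N →ₗ[R] D) →ₗ[R] D))

section InjectiveDual

universe v

variable {D : Type v} [AddCommGroup D] [Module R D] [Small.{v} R] [Module.Injective R D]
  {A B C : Type*} [AddCommGroup A] [AddCommGroup B] [AddCommGroup C]
  [Module R A] [Module R B] [Module R C]

theorem exact_lcomp_of_injective {f : A →ₗ[R] B} {g : B →ₗ[R] C} (h : Function.Exact f g) :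
    Function.Exact (g.lcomp R D) (f.lcomp R D) := by
  refine fun η ↦ ⟨fun hη ↦ ?_, ?_⟩
  · have hle : LinearMap.ker g ≤ LinearMap.ker η := by
      rw [LinearMap.exact_iff.1 h, LinearMap.range_le_ker_iff]
      exact hη
    obtain ⟨ξ, hξ⟩ := Module.Injective.extension_property R D _ _
      ((LinearMap.ker g).liftQ g le_rfl)
      (LinearMap.ker_eq_bot.1 (Submodule.ker_liftQ_eq_bot _ _ _ le_rfl))
      ((LinearMap.ker g).liftQ η hle)
    exact ⟨ξ, LinearMap.ext fun b ↦ LinearMap.congr_fun hξ ((LinearMap.ker g).mkQ b)⟩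
  · rintro ⟨ξ, rfl⟩
    ext a
    simp [h.apply_apply_eq_zero]

theorem IsTorsionless.of_exact (hB : IsTorsionless R D B)
    (hA : Function.Surjective (LinearMap.applyₗ : A →ₗ[R] ((A →ₗ[R] D) →ₗ[R] D)))
    {f : A →ₗ[R] B} {g : B →ₗ[R] C} (h : Function.Exact f g) (hg : Function.Surjective g) :
    IsTorsionless R D C := by
  refine (injective_iff_map_eq_zero _).2 fun x hx ↦ ?_
  obtain ⟨y, rfl⟩ := hg x
  have hy : (g.lcomp R D).lcomp R D (LinearMap.applyₗ y) = 0 := hx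
  obtain ⟨ω, hω⟩ := (exact_lcomp_of_injective (exact_lcomp_of_injective h) _).1 hy
  obtain ⟨z, rfl⟩ := hA ω
  have hzy : f z = y := hB hω
  rw [← hzy, h.apply_apply_eq_zero]

open TensorProduct in
theorem exists_lcomp_comp_eq_of_flat {P : Type*} [AddCommGroup P] [Module R P] [Module.Flat R P]
    {i : A →ₗ[R] B} (hi : Function.Injective i) (g : P →ₗ[R] A →ₗ[R] D) :
    ∃ h : P →ₗ[R] B →ₗ[R] D, i.lcomp R D ∘ₗ h = g := by
  obtain ⟨ψ, hψ⟩ := Module.Injective.extension_property R D _ _ (i.lTensor P)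
    (Module.Flat.lTensor_preserves_injective_linearMap i hi) (TensorProduct.lift g)
  refine ⟨TensorProduct.curry ψ, ?_⟩
  ext p a
  exact LinearMap.congr_fun hψ (p ⊗ₜ a)

end InjectiveDual

theorem IsMatlisReflexive.isFlatPrecover {D F N : Type u}
    [AddCommGroup D] [AddCommGroup F] [AddCommGroup N] [Module R D] [Module R F] [Module R N]
    [Module.Injective R D] [Module.Flat R F]
    (hF : IsMatlisReflexive R D F) (hN : IsTorsionless R D N)
    {f : F →ₗ[R] N} (hf : Function.Surjective f) : IsFlatPrecover R f := by
  refine ⟨‹Module.Flat R F›, fun P _ _ _ g ↦ ?_⟩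
  obtain ⟨k, hk⟩ := exists_lcomp_comp_eq_of_flat
    (LinearMap.lcomp_injective_of_surjective (S := R) (N := D) f hf) (LinearMap.applyₗ ∘ₗ g)
  let ev : F ≃ₗ[R] ((F →ₗ[R] D) →ₗ[R] D) := LinearEquiv.ofBijective LinearMap.applyₗ hF
  refine ⟨ev.symm ∘ₗ k, LinearMap.ext fun p ↦ hN ?_⟩
  calc LinearMap.applyₗ (f (ev.symm (k p)))
      = (f.lcomp R D).lcomp R D (ev (ev.symm (k p))) := rfl
    _ = (f.lcomp R D).lcomp R D (k p) := by rw [ev.apply_symm_apply]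
    _ = LinearMap.applyₗ (g p) := LinearMap.congr_fun hk p

section Retract

variable (R) in
/-- `G` is a retract of `F`, equivalently isomorphic to a direct summand of `F`. -/
def IsRetract (G F : Type*) [AddCommGroup G] [AddCommGroup F] [Module R G] [Module R F] : Prop :=
  ∃ (s : G →ₗ[R] F) (r : F →ₗ[R] G), r ∘ₗ s = LinearMap.id

variable {F G N N' : Type*} [AddCommGroup F] [AddCommGroup G] [AddCommGroup N] [AddCommGroup N']
  [Module R F] [Module R G] [Module R N] [Module R N']

theorem IsRetract.refl : IsRetract R F F :=
  ⟨LinearMap.id, LinearMap.id, rfl⟩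

/-- `g` is a retract of `f` in the category of arrows of `R`-modules, by means of sections and
retractions that commute with `g` and `f`. -/
def IsArrowRetract (g : G →ₗ[R] N') (f : F →ₗ[R] N) : Prop :=
  ∃ (S : G →ₗ[R] F) (T : F →ₗ[R] G) (s : N' →ₗ[R] N) (r : N →ₗ[R] N'),
    T ∘ₗ S = LinearMap.id ∧ r ∘ₗ s = LinearMap.id ∧ f ∘ₗ S = s ∘ₗ g ∧ g ∘ₗ T = r ∘ₗ f

namespace IsArrowRetract

variable {g : G →ₗ[R] N'} {f : F →ₗ[R] N}

theorem isRetract_domain (h : IsArrowRetract g f) : IsRetract R G F :=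
  let ⟨S, T, _, _, hTS, _⟩ := h
  ⟨S, T, hTS⟩

theorem isRetract_ker (h : IsArrowRetract g f) :
    IsRetract R (LinearMap.ker g) (LinearMap.ker f) := by
  obtain ⟨S, T, s, r, hTS, -, hS, hT⟩ := h
  have hSker : ∀ x ∈ LinearMap.ker g, S x ∈ LinearMap.ker f := fun x hx ↦ by
    rw [LinearMap.mem_ker] at hx ⊢
    rw [← LinearMap.comp_apply, hS, LinearMap.comp_apply, hx, map_zero]
  have hTker : ∀ x ∈ LinearMap.ker f, T x ∈ LinearMap.ker g := fun x hx ↦ by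
    rw [LinearMap.mem_ker] at hx ⊢
    rw [← LinearMap.comp_apply, hT, LinearMap.comp_apply, hx, map_zero]
  exact ⟨S.restrict hSker, T.restrict hTker,
    LinearMap.ext fun x ↦ Subtype.ext (LinearMap.congr_fun hTS x)⟩

end IsArrowRetract

end Retract

section

variable {F G N N' : Type u} [AddCommGroup F] [AddCommGroup G] [AddCommGroup N] [AddCommGroup N']
  [Module R F] [Module R G] [Module R N] [Module R N']

theorem IsFlatCover.isArrowRetract {g : G →ₗ[R] N'} {f : F →ₗ[R] N}
    (hg : IsFlatCover R g) (hf : IsFlatPrecover R f) (hN : IsRetract R N' N) :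
    IsArrowRetract g f := by
  obtain ⟨s, r, hrs⟩ := hN
  obtain ⟨S, hS⟩ := hf.2 G hg.1.1 (s ∘ₗ g)
  obtain ⟨T, hT⟩ := hg.1.2 F hf.1 (r ∘ₗ f)
  have hgTS : g ∘ₗ (T ∘ₗ S) = g := by
    rw [← LinearMap.comp_assoc, hT, LinearMap.comp_assoc, hS, ← LinearMap.comp_assoc, hrs,
      LinearMap.id_comp]
  let a : G ≃ₗ[R] G := LinearEquiv.ofBijective (T ∘ₗ S) (hg.2 _ hgTS)
  have hga : g ∘ₗ a.symm = g := by
    ext x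
    calc g (a.symm x) = g (a (a.symm x)) := (LinearMap.congr_fun hgTS (a.symm x)).symm
      _ = g x := by rw [a.apply_symm_apply]
  refine ⟨S, a.symm ∘ₗ T, s, r, LinearMap.ext fun x ↦ a.symm_apply_apply x, hrs, hS, ?_⟩
  rw [← LinearMap.comp_assoc, hga, hT]

theorem IsMatlisReflexive.of_isRetract {D : Type u} [AddCommGroup D] [Module R D]
    (hF : IsMatlisReflexive R D F) (h : IsRetract R G F) : IsMatlisReflexive R D G := by
  obtain ⟨s, r, hrs⟩ := h
  refine ⟨fun x y hxy ↦ ?_, fun ω ↦ ?_⟩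
  · have hs : s x = s y :=
      hF.1 (LinearMap.ext fun η ↦ LinearMap.congr_fun hxy (η ∘ₗ s))
    exact LinearMap.injective_of_comp_eq_id s r hrs hs
  · obtain ⟨y, hy⟩ := hF.2 (ω ∘ₗ s.lcomp R D)
    refine ⟨r y, LinearMap.ext fun ξ ↦ ?_⟩
    calc ξ (r y) = ω ((ξ ∘ₗ r) ∘ₗ s) := LinearMap.congr_fun hy (ξ ∘ₗ r)
      _ = ω ξ := by rw [LinearMap.comp_assoc, hrs, LinearMap.comp_id]

end

section Resolution

variable {D M : Type u} [AddCommGroup D] [AddCommGroup M] [Module R D] [Module R M]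
  {F : ℕ → Type u} [∀ n, AddCommGroup (F n)] [∀ n, Module R (F n)]
  {π : F 0 →ₗ[R] M} {d : ∀ n, F (n + 1) →ₗ[R] F n}

variable (D π d) in
/-- `⋯ → F₁ → F₀ → M → 0` is a resolution of `M` by flat modules that are reflexive with respect
to `Hom(-, D)`. -/
structure IsReflexiveFlatResolution : Prop where
  surjective : Function.Surjective π
  range_zero : LinearMap.range (d 0) = LinearMap.ker π
  range_succ : ∀ n, LinearMap.range (d (n + 1)) = LinearMap.ker (d n)
  flat : ∀ n, Module.Flat R (F n)
  reflexive : ∀ n, IsMatlisReflexive R D (F n)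

namespace IsReflexiveFlatResolution

theorem tail (h : IsReflexiveFlatResolution D π d) :
    IsReflexiveFlatResolution (F := fun n ↦ F (n + 1)) D (d 0).rangeRestrict fun n ↦ d (n + 1) where
  surjective := (d 0).surjective_rangeRestrict
  range_zero := by rw [LinearMap.ker_rangeRestrict, h.range_succ]
  range_succ n := h.range_succ (n + 1)
  flat n := h.flat (n + 1)
  reflexive n := h.reflexive (n + 1)

theorem isFlatPrecover [Module.Injective R D] (h : IsReflexiveFlatResolution D π d) :
    IsFlatPrecover R π :=
  have := h.flat 0
  have hM : IsTorsionless R D M := IsTorsionless.of_exact (h.reflexive 0).1 (h.reflexive 1).2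
    (LinearMap.exact_iff.2 h.range_zero.symm) h.surjective
  (h.reflexive 0).isFlatPrecover hM h.surjective

end IsReflexiveFlatResolution

theorem IsMinimalFlatResolution.tail (h : IsMinimalFlatResolution R M F π d) :
    IsMinimalFlatResolution R (LinearMap.range (d 0)) (fun n ↦ F (n + 1)) (d 0).rangeRestrict
      fun n ↦ d (n + 1) := by
  obtain ⟨-, -, hd, -, hcover⟩ := h
  exact ⟨(d 0).surjective_rangeRestrict, by rw [LinearMap.ker_rangeRestrict, hd],
    fun n ↦ hd (n + 1), hcover 0, fun n ↦ hcover (n + 1)⟩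

variable {M' : Type u} [AddCommGroup M'] [Module R M']
  {G : ℕ → Type u} [∀ n, AddCommGroup (G n)] [∀ n, Module R (G n)]
  {ρ : G 0 →ₗ[R] M'} {e : ∀ n, G (n + 1) →ₗ[R] G n}

theorem IsMinimalFlatResolution.isArrowRetract [Module.Injective R D]
    (hG : IsMinimalFlatResolution R M' G ρ e) (hF : IsReflexiveFlatResolution D π d)
    (hM : IsRetract R M' M) : IsArrowRetract ρ π := by
  obtain ⟨-, -, -, hρ, -⟩ := hG
  exact hρ.isArrowRetract hF.isFlatPrecover hM

theorem minimalFlatResolution_matlisReflexive_general [Module.Injective R D]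
    (hF : IsReflexiveFlatResolution D π d) (hM : IsRetract R M' M)
    (hG : IsMinimalFlatResolution R M' G ρ e) (n : ℕ) : IsMatlisReflexive R D (G n) := by
  induction n generalizing M M' F G with
  | zero => exact (hF.reflexive 0).of_isRetract (hG.isArrowRetract hF hM).isRetract_domain
  | succ _ ih =>
    have hsyzygy : IsRetract R (LinearMap.range (e 0)) (LinearMap.range (d 0)) := by
      rw [hG.2.1, hF.range_zero]
      exact (hG.isArrowRetract hF hM).isRetract_ker
    exact ih hF.tail hsyzygy hG.tail

end Resolution

variable (R)

/-- Over a commutative Noetherian ring, if `M` admits a resolution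
consisting of Matlis reflexive flat modules, then every module appearing in the
minimal flat resolution of `M` is Matlis reflexive.  Here the Matlis dualizing module
`⊕ E(R/𝔫)` is presented by a family `En 𝔫` of injective envelopes
`j 𝔫 : R/𝔫 → En 𝔫` of the residue fields of the maximal ideals `𝔫` of `R`. -/
theorem minimalFlatResolution_matlisReflexive [IsNoetherianRing R]
    (En : MaximalSpectrum R → Type u) [∀ 𝔫, AddCommGroup (En 𝔫)] [∀ 𝔫, Module R (En 𝔫)]
    (j : ∀ 𝔫 : MaximalSpectrum R, (R ⧸ 𝔫.asIdeal) →ₗ[R] En 𝔫)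
    (hj : ∀ 𝔫, IsInjectiveEnvelope R (j 𝔫))
    {M : Type u} [AddCommGroup M] [Module R M]
    (h : ∃ (F : ℕ → Type u) (_ : ∀ n, AddCommGroup (F n)) (_ : ∀ n, Module R (F n))
        (π : F 0 →ₗ[R] M) (d : ∀ n, F (n + 1) →ₗ[R] F n),
        Function.Surjective π ∧
          LinearMap.range (d 0) = LinearMap.ker π ∧
          (∀ n, LinearMap.range (d (n + 1)) = LinearMap.ker (d n)) ∧
          (∀ n, Module.Flat R (F n)) ∧
          ∀ n, IsMatlisReflexive R (⨁ 𝔫, En 𝔫) (F n)) :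
    ∀ (G : ℕ → Type u) (_ : ∀ n, AddCommGroup (G n)) (_ : ∀ n, Module R (G n))
      (ρ : G 0 →ₗ[R] M) (e : ∀ n, G (n + 1) →ₗ[R] G n),
      IsMinimalFlatResolution R M G ρ e →
        ∀ n, IsMatlisReflexive R (⨁ 𝔫, En 𝔫) (G n) := by
  obtain ⟨F, _, _, π, d, hπ, hd₀, hd, hflat, hrefl⟩ := h
  have := injective_directSum fun 𝔫 ↦ Module.Baer.of_injective (hj 𝔫).1
  intro G _ _ ρ e hG
  exact minimalFlatResolution_matlisReflexive_general ⟨hπ, hd₀, hd, hflat, hrefl⟩ .refl hG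
end
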